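/- arXiv:1705.01333 — 11 statements merged into one kernel-verified Lean document; each statement's English description precedes it below -/
import Mathlib

section
/- For every integer n ≥ 1, every real coupling constant g, every pair (q,p) ∈ ℝⁿ × ℝⁿ with q₁ > q₂ > … > q_n, and every z ∈ ℂ, the functions A(z) = det(z·1_n − L), C(z) = tr(Q · adj(z·1_n − L) · v vᵀ) and D(z) = tr(Q · adj(z·1_n − L)) satisfy C(z) = D(z) + (i g / 2) · A''(z), where A'' denotes the second derivative of the polynomial z ↦ det(z·1_n − L). -/
/-!
Write `M = X - L` for the characteristic matrix, `B = adj M` and `V = v vᵀ`. Off the diagonal the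
Lax matrix is chosen so that `[Q, M] = c (1 - V)`, where `c = i g`, and Jacobi's formula expresses
both derivatives of `det M` by traces of `B`:
`(det M)' = tr B` and `det M · (det M)'' = (tr B)² - tr B²`.
Since `B M = M B = det M`, the traces of `B [Q, M]`, of `B (Q [Q, M] + [Q, M] Q)` and of
`B [Q, M] B = det M · [B, Q]` vanish, which gives `tr BV = tr B`,
`tr BQV + tr QBV = 2 tr QB` and `tr BVB = tr B²`. Multiplying `det M · [B, Q] = c (B² - BVB)` by `V`
and using that `V` has rank one, `tr BVBV = (tr BV)²`, determines `tr QBV - tr BQV` as well.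
The factors `c` and `det M` are cancelled over the polynomial ring, before evaluating at `z`. If
`c = 0`, then `QB` is diagonal, hence `tr QBV = tr QB` because `V` has unit diagonal.
-/

open Matrix Polynomial

section Derivation

variable {S A ι l m n : Type*} [CommSemiring S] [CommRing A] [Algebra S A] (D : Derivation S A A)

theorem derivation_prod [DecidableEq ι] (s : Finset ι) (f : ι → A) :
    D (∏ i ∈ s, f i) = ∑ i ∈ s, (∏ j ∈ s.erase i, f j) * D (f i) := by
  induction s using Finset.induction_on with
  | empty => simp only [Finset.prod_empty, Derivation.map_one_eq_zero, Finset.sum_empty]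
  | insert a s ha ih =>
    have erase_insert : ∀ i ∈ s, ∏ j ∈ (insert a s).erase i, f j = f a * ∏ j ∈ s.erase i, f j := by
      intro i hi
      rw [Finset.erase_insert_of_ne (ne_of_mem_of_not_mem hi ha).symm,
        Finset.prod_insert (fun h => ha (Finset.mem_of_mem_erase h))]
    rw [Finset.prod_insert ha, D.leibniz, ih, Finset.sum_insert ha, Finset.erase_insert ha,
      smul_eq_mul, smul_eq_mul, add_comm, Finset.mul_sum]
    congr 1
    exact Finset.sum_congr rfl fun i hi => by rw [erase_insert i hi, mul_assoc]

variable [Fintype n]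

theorem map_derivation_mul (X : Matrix l n A) (Y : Matrix n m A) :
    (X * Y).map D = X.map D * Y + X * Y.map D := by
  ext i j
  simp [mul_apply, Finset.sum_add_distrib, mul_comm, add_comm]

variable [DecidableEq n]

theorem derivation_det_eq_sum_det_updateCol (M : Matrix n n A) :
    D M.det = ∑ i, (M.updateCol i fun j => D (M j i)).det := by
  simp only [det_apply, map_sum, Finset.sum_comm (s := Finset.univ (α := n))]
  refine Finset.sum_congr rfl fun σ _ => ?_
  rw [← Finset.smul_sum, Units.smul_def, Units.smul_def, map_zsmul, derivation_prod]
  congr 1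
  refine Finset.sum_congr rfl fun i _ => ?_
  rw [← Finset.prod_erase_mul _ _ (Finset.mem_univ i), updateCol_self]
  congr 1
  exact Finset.prod_congr rfl fun j hj => (updateCol_ne (Finset.ne_of_mem_erase hj)).symm

theorem derivation_det (M : Matrix n n A) : D M.det = (M.adjugate * M.map D).trace := by
  rw [derivation_det_eq_sum_det_updateCol]
  refine Finset.sum_congr rfl fun i _ => ?_
  rw [← cramer_apply, cramer_eq_adjugate_mulVec]
  rfl

-- For invertible `M` this is the product rule for `adj M = det M • M⁻¹`, where
-- `D M⁻¹ = -M⁻¹ (D M) M⁻¹`.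
theorem det_smul_map_derivation_adjugate (M : Matrix n n A) :
    M.det • M.adjugate.map D =
      D M.det • M.adjugate - M.adjugate * M.map D * M.adjugate := by
  have leibniz : M.adjugate.map D * M + M.adjugate * M.map D = D M.det • 1 := by
    rw [← map_derivation_mul, adjugate_mul]
    ext i j
    obtain rfl | hij := eq_or_ne i j <;> simp [*]
  calc M.det • M.adjugate.map D = M.adjugate.map D * M * M.adjugate := by
        rw [Matrix.mul_assoc, mul_adjugate, Matrix.mul_smul, Matrix.mul_one]
    _ = _ := by
        rw [eq_sub_of_add_eq leibniz, Matrix.sub_mul, Matrix.smul_mul, Matrix.one_mul]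

end Derivation

section Polynomial

theorem isLeftRegular_C {R : Type*} [Semiring R] {c : R} (hc : IsLeftRegular c) :
    IsLeftRegular (C c) := by
  intro a b hab
  ext k
  apply hc
  simpa only [coeff_C_mul] using congrArg (coeff · k) hab

theorem map_C_vecMulVec {R m n : Type*} [Semiring R] (v : m → R) (w : n → R) :
    (vecMulVec v w).map C = vecMulVec (C ∘ v) (C ∘ w) := by
  ext1 i j
  simp [vecMulVec_apply]

theorem iteratedDeriv_polynomial_eval {𝕜 : Type*} [NontriviallyNormedField 𝕜] (p : 𝕜[X]) (k : ℕ) :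
    iteratedDeriv k (fun w => p.eval w) = fun w => (derivative^[k] p).eval w := by
  induction k generalizing p with
  | zero => exact iteratedDeriv_zero
  | succ k ih =>
    rw [iteratedDeriv_succ', funext fun w => p.deriv (x := w), ih, Function.iterate_succ_apply]

end Polynomial

section Charpoly

variable {R n : Type*} [CommRing R] [Fintype n] [DecidableEq n] (L : Matrix n n R)

theorem map_derivative_charmatrix : L.charmatrix.map (derivative' (R := R)) = 1 := by
  ext1 i j
  obtain rfl | hij := eq_or_ne i j <;> simp [derivative', *]

theorem derivative_charpoly : derivative L.charpoly = L.charmatrix.adjugate.trace := by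
  simpa only [map_derivative_charmatrix, Matrix.mul_one] using!
    derivation_det (derivative' (R := R)) L.charmatrix

theorem charpoly_mul_derivative_derivative_charpoly :
    L.charpoly * derivative (derivative L.charpoly) =
      L.charmatrix.adjugate.trace ^ 2 - (L.charmatrix.adjugate * L.charmatrix.adjugate).trace := by
  have trace_map : (L.charmatrix.adjugate.map (derivative' (R := R))).trace =
      derivative (derivative L.charpoly) := by
    rw [derivative_charpoly]
    exact (AddMonoidHom.map_trace derivative _).symm
  have trace_eq := congrArg trace
    (det_smul_map_derivation_adjugate (derivative' (R := R)) L.charmatrix)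
  rw [map_derivative_charmatrix, Matrix.mul_one, trace_smul, trace_sub, trace_smul,
    trace_map] at trace_eq
  calc L.charpoly * derivative (derivative L.charpoly)
      = derivative L.charpoly * L.charmatrix.adjugate.trace -
          (L.charmatrix.adjugate * L.charmatrix.adjugate).trace := trace_eq
    _ = _ := by rw [derivative_charpoly, sq]

theorem lie_map_C_charmatrix (Q : Matrix n n R) :
    ⁅Q.map C, L.charmatrix⁆ = -(⁅Q, L⁆.map C) := by
  rw [charmatrix, Ring.lie_def, Ring.lie_def, Matrix.mul_sub, Matrix.sub_mul,
    (scalar_commute X (fun r => Commute.all X r) (Q.map C)).eq, sub_sub_sub_cancel_left,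
    Matrix.map_sub _ (map_sub C), Matrix.map_mul, Matrix.map_mul, RingHom.mapMatrix_apply,
    neg_sub]

theorem eval_trace_map_C_mul_adjugate_charmatrix (Y : Matrix n n R) (z : R) :
    (Y.map C * L.charmatrix.adjugate).trace.eval z = (Y * (z • 1 - L).adjugate).trace := by
  have eval_charmatrix : (evalRingHom z).mapMatrix L.charmatrix = z • 1 - L := by
    ext i j
    obtain rfl | hij := eq_or_ne i j <;> simp [*]
  have eval_map_C : (evalRingHom z).mapMatrix (Y.map C) = Y := by
    ext i j
    simp
  rw [← coe_evalRingHom, AddMonoidHom.map_trace, ← RingHom.mapMatrix_apply, map_mul,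
    RingHom.map_adjugate, eval_charmatrix, eval_map_C]

theorem iteratedDeriv_det_smul_one_sub {𝕜 : Type*} [NontriviallyNormedField 𝕜]
    (L : Matrix n n 𝕜) (k : ℕ) (z : 𝕜) :
    iteratedDeriv k (fun w => (w • (1 : Matrix n n 𝕜) - L).det) z =
      (derivative^[k] L.charpoly).eval z := by
  simp only [smul_one_eq_diagonal, ← scalar_apply, ← eval_charpoly, iteratedDeriv_polynomial_eval]

end Charpoly

section Commutator

variable {R n : Type*} [CommRing R] [Fintype n]

theorem trace_mul_vecMulVec_mul_self (Y : Matrix n n R) (v w : n → R) :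
    (Y * vecMulVec v w * (Y * vecMulVec v w)).trace = (Y * vecMulVec v w).trace ^ 2 := by
  rw [mul_vecMulVec, vecMulVec_mul_vecMulVec, vecMulVec_smul, trace_smul, trace_vecMulVec,
    smul_eq_mul, sq, dotProduct_comm w]

variable [DecidableEq n]

theorem trace_adjugate_mul_lie (M Y : Matrix n n R) : (M.adjugate * ⁅Y, M⁆).trace = 0 := by
  rw [Ring.lie_def, Matrix.mul_sub, trace_sub, ← Matrix.mul_assoc, ← Matrix.mul_assoc,
    trace_mul_cycle, mul_adjugate, adjugate_mul, sub_self]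

theorem adjugate_mul_lie_mul_adjugate (M Y : Matrix n n R) :
    M.adjugate * ⁅Y, M⁆ * M.adjugate = M.det • ⁅M.adjugate, Y⁆ := by
  calc M.adjugate * ⁅Y, M⁆ * M.adjugate
      = M.adjugate * Y * (M * M.adjugate) - M.adjugate * M * Y * M.adjugate := by
        rw [Ring.lie_def]
        noncomm_ring
    _ = M.det • ⁅M.adjugate, Y⁆ := by
        simp only [mul_adjugate, adjugate_mul, Matrix.mul_smul, Matrix.smul_mul, Matrix.mul_one,
          Matrix.one_mul, Ring.lie_def, smul_sub]

variable {M Q V : Matrix n n R} {c : R}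

theorem trace_adjugate_mul_of_lie_eq (hc : IsLeftRegular c) (h : ⁅Q, M⁆ = c • (1 - V)) :
    (M.adjugate * V).trace = M.adjugate.trace := by
  have trace_zero := trace_adjugate_mul_lie M Q
  rw [h, Matrix.mul_smul, trace_smul, Matrix.mul_sub, Matrix.mul_one, trace_sub] at trace_zero
  exact hc (by linear_combination -trace_zero)

theorem trace_adjugate_mul_mul_add_trace_of_lie_eq (hc : IsLeftRegular c)
    (h : ⁅Q, M⁆ = c • (1 - V)) :
    (M.adjugate * Q * V).trace + (Q * M.adjugate * V).trace = 2 * (Q * M.adjugate).trace := by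
  have lie_sq : ⁅Q * Q, M⁆ = c • (2 • Q - Q * V - V * Q) := by
    calc ⁅Q * Q, M⁆ = Q * ⁅Q, M⁆ + ⁅Q, M⁆ * Q := by
          simp only [Ring.lie_def]
          noncomm_ring
      _ = c • (2 • Q - Q * V - V * Q) := by
          rw [h, Matrix.mul_smul, Matrix.smul_mul, ← smul_add]
          congr 1
          noncomm_ring
  have trace_zero := trace_adjugate_mul_lie M (Q * Q)
  rw [lie_sq, Matrix.mul_smul, trace_smul, Matrix.mul_sub, Matrix.mul_sub, trace_sub, trace_sub,
    Matrix.mul_smul, trace_smul, trace_mul_comm _ Q, ← Matrix.mul_assoc, ← Matrix.mul_assoc,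
    trace_mul_cycle _ V] at trace_zero
  apply hc
  simp only [smul_eq_mul, nsmul_eq_mul, Nat.cast_ofNat] at trace_zero ⊢
  linear_combination -trace_zero

theorem trace_adjugate_mul_mul_adjugate_of_lie_eq (hc : IsLeftRegular c)
    (h : ⁅Q, M⁆ = c • (1 - V)) :
    (M.adjugate * V * M.adjugate).trace = (M.adjugate * M.adjugate).trace := by
  have trace_zero := congrArg trace (adjugate_mul_lie_mul_adjugate M Q)
  rw [trace_smul, Ring.lie_def M.adjugate, trace_sub, trace_mul_comm Q, sub_self, smul_zero, h,
    Matrix.mul_smul, Matrix.smul_mul, trace_smul, Matrix.mul_sub, Matrix.mul_one, Matrix.sub_mul,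
    trace_sub] at trace_zero
  exact hc (by linear_combination -trace_zero)

theorem det_mul_trace_adjugate_mul_mul_sub_trace_of_lie_eq {v w : n → R} (hc : IsLeftRegular c)
    (h : ⁅Q, M⁆ = c • (1 - vecMulVec v w)) :
    M.det * ((M.adjugate * Q * vecMulVec v w).trace - (Q * M.adjugate * vecMulVec v w).trace) =
      c * ((M.adjugate * M.adjugate).trace - M.adjugate.trace ^ 2) := by
  have trace_eq := congrArg (fun Y => (Y * vecMulVec v w).trace)
    (adjugate_mul_lie_mul_adjugate M Q)
  simp only [h, Ring.lie_def, Matrix.mul_smul, Matrix.smul_mul, trace_smul, Matrix.mul_sub,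
    Matrix.mul_one, Matrix.sub_mul, trace_sub, smul_eq_mul] at trace_eq
  have trace_sq_mul : (M.adjugate * M.adjugate * vecMulVec v w).trace =
      (M.adjugate * M.adjugate).trace := by
    rw [← trace_adjugate_mul_mul_adjugate_of_lie_eq hc h, ← trace_mul_cycle]
  rw [← trace_eq, trace_sq_mul, Matrix.mul_assoc (_ * _) M.adjugate, trace_mul_vecMulVec_mul_self,
    trace_adjugate_mul_of_lie_eq hc h]

end Commutator

section RankOneCommutator

variable {R n : Type*} [CommRing R] [Fintype n] [DecidableEq n]
variable {Q L : Matrix n n R} {v w : n → R} {c : R}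

theorem lie_map_C_charmatrix_of_lie_eq (h : ⁅Q, L⁆ = c • (vecMulVec v w - 1)) :
    ⁅Q.map C, L.charmatrix⁆ = C c • (1 - vecMulVec (C ∘ v) (C ∘ w)) := by
  rw [lie_map_C_charmatrix, h, ← neg_sub (vecMulVec _ _), smul_neg, ← map_C_vecMulVec]
  ext1 i j
  obtain rfl | hij := eq_or_ne i j <;> simp [*]

theorem two_mul_trace_mul_adjugate_charmatrix_mul_vecMulVec_of_lie_eq (hc : IsLeftRegular c)
    (h : ⁅Q, L⁆ = c • (vecMulVec v w - 1)) :
    2 * (Q.map C * L.charmatrix.adjugate * vecMulVec (C ∘ v) (C ∘ w)).trace =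
      2 * (Q.map C * L.charmatrix.adjugate).trace + C c * derivative^[2] L.charpoly := by
  have lie_eq := lie_map_C_charmatrix_of_lie_eq h
  have sum_eq := trace_adjugate_mul_mul_add_trace_of_lie_eq (isLeftRegular_C hc) lie_eq
  have difference_eq :=
    det_mul_trace_adjugate_mul_mul_sub_trace_of_lie_eq (isLeftRegular_C hc) lie_eq
  have derivative_eq := charpoly_mul_derivative_derivative_charpoly L
  rw [← charpoly] at difference_eq
  apply L.charpoly_monic.isRegular.left
  simp only [Function.iterate_succ, Function.iterate_zero, Function.comp_apply, id_eq]
  linear_combination L.charpoly * sum_eq - difference_eq - C c * derivative_eq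

theorem two_mul_trace_mul_adjugate_mul_vecMulVec_of_lie_eq (hc : IsLeftRegular c)
    (h : ⁅Q, L⁆ = c • (vecMulVec v w - 1)) (z : R) :
    2 * (Q * (z • 1 - L).adjugate * vecMulVec v w).trace =
      2 * (Q * (z • 1 - L).adjugate).trace + c * (derivative^[2] L.charpoly).eval z := by
  have eval_eq :=
    congrArg (eval z) (two_mul_trace_mul_adjugate_charmatrix_mul_vecMulVec_of_lie_eq hc h)
  rw [trace_mul_cycle, ← map_C_vecMulVec, ← Matrix.map_mul] at eval_eq
  rw [trace_mul_cycle]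
  simpa only [eval_add, eval_mul, eval_ofNat, eval_C,
    eval_trace_map_C_mul_adjugate_charmatrix] using eval_eq

end RankOneCommutator

section CalogeroMoser

variable {K n : Type*} [Field K] [DecidableEq n]

/-- The Lax matrix of the rational Calogero-Moser system with positions `q` and momenta `p`. The
off-diagonal numerator `c` stands for `i g`, and the positions are meant to be distinct. -/
def calogeroMoserLax (c : K) (q p : n → K) : Matrix n n K :=
  Matrix.of fun j k => if j = k then p j else c / (q j - q k)

theorem calogeroMoserLax_zero (q p : n → K) : calogeroMoserLax 0 q p = diagonal p := by
  ext j k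
  simp [calogeroMoserLax, diagonal_apply]

variable [Fintype n]

theorem lie_diagonal_calogeroMoserLax (c : K) {q : n → K} (hq : Function.Injective q)
    (p : n → K) :
    ⁅diagonal q, calogeroMoserLax c q p⁆ = c • (vecMulVec 1 1 - 1) := by
  ext j k
  obtain rfl | hjk := eq_or_ne j k
  · simp [Ring.lie_def, mul_comm]
  · have hsub : q j - q k ≠ 0 := sub_ne_zero.mpr (hq.ne hjk)
    simp only [Ring.lie_def, calogeroMoserLax, Matrix.sub_apply, diagonal_mul, mul_diagonal,
      of_apply, if_neg hjk, Matrix.smul_apply, vecMulVec_apply, Pi.one_apply, one_apply_ne hjk,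
      smul_eq_mul]
    field_simp
    ring

theorem stmt0_general (c : K) {q : n → K} (hq : Function.Injective q) (p : n → K) (z : K) :
    2 * (diagonal q * (z • 1 - calogeroMoserLax c q p).adjugate *
        Matrix.of (fun _ _ => (1 : K))).trace =
      2 * (diagonal q * (z • 1 - calogeroMoserLax c q p).adjugate).trace +
        c * (derivative^[2] (calogeroMoserLax c q p).charpoly).eval z := by
  have all_ones : Matrix.of (fun _ _ : n => (1 : K)) = vecMulVec (1 : n → K) 1 := by
    ext
    simp [vecMulVec_apply]
  obtain rfl | hc := eq_or_ne c 0
  · have shifted_eq : z • 1 - calogeroMoserLax 0 q p = diagonal fun i => z - p i := by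
      rw [calogeroMoserLax_zero, smul_one_eq_diagonal, diagonal_sub]
    rw [shifted_eq, adjugate_diagonal, diagonal_mul_diagonal, zero_mul, add_zero]
    simp only [trace, diag_apply, diagonal_mul, of_apply, mul_one, diagonal_apply_eq]
  · rw [all_ones]
    exact two_mul_trace_mul_adjugate_mul_vecMulVec_of_lie_eq (IsRegular.of_ne_zero hc).left
      (lie_diagonal_calogeroMoserLax c hq p) z

end CalogeroMoser

/-- Thesis Theorem 1.2 (the identity behind Sklyanin's formula for the rational
Calogero-Moser system): `C(z) = D(z) + (i g / 2) A''(z)`. -/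
theorem stmt0 (n : ℕ) (hn : 1 ≤ n) (g : ℝ) (q p : Fin n → ℝ)
    (hq : ∀ i j : Fin n, i < j → q j < q i) (z : ℂ) :
    let L : Matrix (Fin n) (Fin n) ℂ :=
      Matrix.of fun j k =>
        if j = k then (p j : ℂ) else Complex.I * (g : ℂ) / ((q j : ℂ) - (q k : ℂ))
    let Q : Matrix (Fin n) (Fin n) ℂ := Matrix.diagonal fun j => (q j : ℂ)
    let A : ℂ → ℂ := fun w => (w • (1 : Matrix (Fin n) (Fin n) ℂ) - L).det
    let C : ℂ → ℂ := fun w =>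
      (Q * (w • (1 : Matrix (Fin n) (Fin n) ℂ) - L).adjugate *
          Matrix.of (fun _ _ => (1 : ℂ))).trace
    let D : ℂ → ℂ := fun w => (Q * (w • (1 : Matrix (Fin n) (Fin n) ℂ) - L).adjugate).trace
    C z = D z + Complex.I * (g : ℂ) / 2 * iteratedDeriv 2 A z := by
  intro L Q A C D
  have q_injective : Function.Injective fun j => (q j : ℂ) :=
    Complex.ofReal_injective.comp (StrictAnti.injective hq)
  have general : 2 * C z = 2 * D z + Complex.I * g * (derivative^[2] L.charpoly).eval z :=
    stmt0_general _ q_injective _ z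
  rw [iteratedDeriv_det_smul_one_sub]
  linear_combination general / 2
end

section
/- Let μ, ν, λ be real numbers with μ ≠ 0, λ ≠ 0, λ ≠ μ and λ ≠ −μ. Then a pair of real numbers (W, W') satisfies the two equations (μ+λ)W + (μ−λ)W' − 2(μ−ν) = 0 and λ²·W·W' − μ(μ−ν)(W + W') + (μ−ν)² + μ² − λ² = 0 if and only if (W, W') = (1 − ν/λ, 1 + ν/λ) or (W, W') = (−1 + (2μ−ν)/λ, −1 − (2μ−ν)/λ). -/
/-!
Put `c = μ - ν` and `s = W + W'`. The linear equation reads `λ (W - W') = 2 c - μ s`, and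
`4 W W' = s² - (W - W')²`, so four times the quadratic expression collapses to
`(λ² - μ²) (s² - 4)`. Hence `s = ±2`, and for each sign the linear equation determines `W - W'`.
-/

section CommRing

variable {R : Type*} [CommRing R] {μ lam c W W' : R}

theorem four_mul_quadratic_eq_of_linear (h : (μ + lam) * W + (μ - lam) * W' = 2 * c) :
    4 * (lam ^ 2 * W * W' - μ * c * (W + W') + c ^ 2 + μ ^ 2 - lam ^ 2) =
      (lam ^ 2 - μ ^ 2) * ((W + W') ^ 2 - 2 ^ 2) := by
  have h_diff : lam * (W - W') = 2 * c - μ * (W + W') := by linear_combination h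
  calc
    _ = (lam ^ 2 - μ ^ 2) * ((W + W') ^ 2 - 2 ^ 2) +
          ((2 * c - μ * (W + W')) ^ 2 - (lam * (W - W')) ^ 2) := by ring
    _ = (lam ^ 2 - μ ^ 2) * ((W + W') ^ 2 - 2 ^ 2) := by rw [h_diff, sub_self, add_zero]

theorem quadratic_eq_zero_iff_of_linear [NoZeroDivisors R] [NeZero (2 : R)]
    (hsq : lam ^ 2 ≠ μ ^ 2) (h : (μ + lam) * W + (μ - lam) * W' = 2 * c) :
    lam ^ 2 * W * W' - μ * c * (W + W') + c ^ 2 + μ ^ 2 - lam ^ 2 = 0 ↔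
      W + W' = 2 ∨ W + W' = -2 := by
  have h_four : (4 : R) ≠ 0 := by
    rw [← two_add_two_eq_four, ← two_mul]
    exact mul_ne_zero two_ne_zero two_ne_zero
  rw [← mul_eq_zero_iff_left h_four, four_mul_quadratic_eq_of_linear h,
    mul_eq_zero_iff_left (sub_ne_zero.mpr hsq), sub_eq_zero, sq_eq_sq_iff_eq_or_eq_neg]

end CommRing

section Field

variable {K : Type*} [Field K] [NeZero (2 : K)]

theorem linear_and_add_eq_two_mul_iff {lam : K} (h0 : lam ≠ 0) (μ c t W W' : K) :
    (μ + lam) * W + (μ - lam) * W' = 2 * c ∧ W + W' = 2 * t ↔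
      W = t + (c - μ * t) / lam ∧ W' = t - (c - μ * t) / lam := by
  constructor
  · rintro ⟨h_lin, h_sum⟩
    have h_mul : (W - t) * lam = c - μ * t :=
      mul_left_cancel₀ two_ne_zero (by linear_combination h_lin + (lam - μ) * h_sum)
    have hW : W = t + (c - μ * t) / lam := sub_eq_iff_eq_add'.mp (eq_div_of_mul_eq h0 h_mul)
    exact ⟨hW, by linear_combination h_sum - hW⟩
  · rintro ⟨rfl, rfl⟩
    constructor
    · field_simp
      ring
    · ring

theorem stmt1_general (μ ν lam W W' : K) (h0 : lam ≠ 0) (h1 : lam ≠ μ) (h2 : lam ≠ -μ) :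
    ((μ + lam) * W + (μ - lam) * W' - 2 * (μ - ν) = 0 ∧
        lam ^ 2 * W * W' - μ * (μ - ν) * (W + W') + (μ - ν) ^ 2 + μ ^ 2 - lam ^ 2 = 0) ↔
      (W = 1 - ν / lam ∧ W' = 1 + ν / lam) ∨
        (W = -1 + (2 * μ - ν) / lam ∧ W' = -1 - (2 * μ - ν) / lam) := by
  have hsq : lam ^ 2 ≠ μ ^ 2 := by
    rw [Ne, sq_eq_sq_iff_eq_or_eq_neg]
    exact not_or.mpr ⟨h1, h2⟩
  have h_pos : (μ + lam) * W + (μ - lam) * W' = 2 * (μ - ν) ∧ W + W' = 2 ↔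
      W = 1 - ν / lam ∧ W' = 1 + ν / lam := by
    convert linear_and_add_eq_two_mul_iff h0 μ (μ - ν) 1 W W' using 3 <;> ring
  have h_neg : (μ + lam) * W + (μ - lam) * W' = 2 * (μ - ν) ∧ W + W' = -2 ↔
      W = -1 + (2 * μ - ν) / lam ∧ W' = -1 - (2 * μ - ν) / lam := by
    convert linear_and_add_eq_two_mul_iff h0 μ (μ - ν) (-1) W W' using 3 <;> ring
  rw [sub_eq_zero (b := 2 * (μ - ν)), and_congr_right (quadratic_eq_zero_iff_of_linear hsq),
    and_or_left, h_pos, h_neg]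

end Field

/-- The pair of algebraic equations (2.103)-(2.104) of the thesis has exactly the two
solutions displayed in (2.105)-(2.106). -/
theorem stmt1 (μ ν lam W W' : ℝ) (hμ : μ ≠ 0) (h0 : lam ≠ 0) (h1 : lam ≠ μ)
    (h2 : lam ≠ -μ) :
    ((μ + lam) * W + (μ - lam) * W' - 2 * (μ - ν) = 0 ∧
        lam ^ 2 * W * W' - μ * (μ - ν) * (W + W') + (μ - ν) ^ 2 + μ ^ 2 - lam ^ 2 = 0) ↔
      (W = 1 - ν / lam ∧ W' = 1 + ν / lam) ∨
        (W = -1 + (2 * μ - ν) / lam ∧ W' = -1 - (2 * μ - ν) / lam) :=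
  stmt1_general μ ν lam W W' h0 h1 h2
end

section
/- Fix an integer n ≥ 1 and real parameters μ, ν. Let λ ∈ ℝⁿ satisfy: λ_c ≠ 0 for all c; λ_a² ≠ λ_b² for all a ≠ b; and 2μ ∉ {λ_a−λ_b, −(λ_a−λ_b), λ_a+λ_b, −(λ_a+λ_b)} for all a ≠ b. Then Σ_{c=1}^{n} [ (1 − ν/λ_c)/w_c + (1 + ν/λ_c)/w_{n+c} ] = 2n, and Σ_{c=1}^{n} [ (−1 + (2μ−ν)/λ_c)/w_c + (−1 − (2μ−ν)/λ_c)/w_{n+c} ] = −2n. -/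
/-!
Put `m = 2μ` and `f = ∏_b (Y - λ_b²)`. Since `f` vanishes at `λ_c²`, the numerator
`∏_{b ≠ c} ((x - m)² - λ_b²)` of `1 / w` at `x = ±λ_c` is the value at `x` of a polynomial `G` that
does not depend on `c`: the divided difference of `f` between `(x - m)²` and `x²`. Splitting `G`
into even and odd parts turns the sums over `±λ_c` into Lagrange interpolation sums over the nodes
`λ_c²`, which read off top coefficients of `G`. As `(x - m)²` and `x²` are both monic of degree `2`,
the leading form `∑_{i + j = n - 1} u^i v^j` of the divided difference contributes the coefficient
`n` in degree `2 (n - 1)`, and there is nothing above it.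
-/

open Finset Polynomial

theorem natDegree_pow_mul_pow_of_monic {R : Type*} [Semiring R] {u v : R[X]} {d : ℕ}
    (hu : u.Monic) (hv : v.Monic) (hud : u.natDegree = d) (hvd : v.natDegree = d) (j k : ℕ) :
    (u ^ j * v ^ k).natDegree = d * (j + k) := by
  rw [(hu.pow j).natDegree_mul (hv.pow k), hu.natDegree_pow, hv.natDegree_pow, hud, hvd]
  ring

section DividedDifference

variable {R S : Type*} [CommRing R] [CommRing S]

/-- The first divided difference `(f(u) - f(v)) / (u - v)` of a polynomial, obtained by polynomial
division so that it makes sense over any commutative ring and also for `u = v`. -/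
noncomputable def dividedDiff (f : R[X]) (u v : R) : R :=
  (f /ₘ (X - C v)).eval u

theorem map_dividedDiff (φ : R →+* S) (f : R[X]) (u v : R) :
    φ (dividedDiff f u v) = dividedDiff (f.map φ) (φ u) (φ v) := by
  simp only [dividedDiff, ← eval_map_apply, map_divByMonic φ (monic_X_sub_C v),
    Polynomial.map_sub, map_X, map_C]

theorem eval_dividedDiff_map_C (f : R[X]) (u v : R[X]) (x : R) :
    (dividedDiff (f.map C) u v).eval x = dividedDiff f (u.eval x) (v.eval x) := by
  have h := map_dividedDiff (evalRingHom x) (f.map C) u v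
  rwa [Polynomial.map_map, show (evalRingHom x).comp C = RingHom.id R by ext; simp,
    Polynomial.map_id] at h

theorem dividedDiff_prod_X_sub_C {ι : Type*} [DecidableEq ι] {s : Finset ι} {c : ι} (hc : c ∈ s)
    (y : ι → R) (u : R) :
    dividedDiff (∏ b ∈ s, (X - C (y b))) u (y c) = ∏ b ∈ s.erase c, (u - y b) := by
  rw [dividedDiff, ← mul_prod_erase s _ hc, mul_divByMonic_cancel_left _ (monic_X_sub_C _),
    eval_prod]
  simp only [eval_sub, eval_X, eval_C]

theorem dividedDiff_eq_sum (f : R[X]) (u v : R) :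
    dividedDiff f u v = ∑ j ∈ range f.natDegree, ∑ i ∈ Icc (j + 1) f.natDegree,
      f.coeff i * (u ^ j * v ^ (i - (j + 1))) := by
  have hdeg : (f /ₘ (X - C v)).natDegree < f.natDegree + 1 := by
    rw [natDegree_divByMonic f (monic_X_sub_C v)]
    omega
  rw [dividedDiff, eval_eq_sum_range' hdeg, sum_range_succ]
  simp only [coeff_divByMonic_X_sub_C, sum_mul]
  rw [Icc_eq_empty (by omega), sum_empty, add_zero]
  exact sum_congr rfl fun j _ ↦ sum_congr rfl fun i _ ↦ by ring

section Degree

variable {u v : R[X]} {d : ℕ}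

theorem coeff_dividedDiff_map_C_eq_zero (hu : u.Monic) (hv : v.Monic) (hud : u.natDegree = d)
    (hvd : v.natDegree = d) (f : R[X]) {k : ℕ} (hk : d * f.natDegree < k + d) :
    (dividedDiff (f.map C) u v).coeff k = 0 := by
  rw [dividedDiff_eq_sum, natDegree_map_eq_of_injective C_injective]
  simp only [finsetSum_coeff, coeff_map, coeff_C_mul]
  refine sum_eq_zero fun j _ ↦ sum_eq_zero fun i hi ↦ ?_
  obtain ⟨hji, hin⟩ := mem_Icc.1 hi
  refine mul_eq_zero_of_right _ (coeff_eq_zero_of_natDegree_lt ?_)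
  rw [natDegree_pow_mul_pow_of_monic hu hv hud hvd]
  have : d * (j + (i - (j + 1)) + 1) ≤ d * f.natDegree := Nat.mul_le_mul_left d (by omega)
  linarith

theorem coeff_dividedDiff_map_C (hu : u.Monic) (hv : v.Monic) (hud : u.natDegree = d)
    (hvd : v.natDegree = d) (hd : 0 < d) (f : R[X]) :
    (dividedDiff (f.map C) u v).coeff (d * (f.natDegree - 1))
      = f.natDegree * f.leadingCoeff := by
  rw [dividedDiff_eq_sum, natDegree_map_eq_of_injective C_injective, finsetSum_coeff,
    ← nsmul_eq_mul]
  refine (sum_eq_card_nsmul fun j hj ↦ ?_).trans (by rw [card_range])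
  have hjn : j < f.natDegree := mem_range.1 hj
  simp only [finsetSum_coeff, coeff_map, coeff_C_mul]
  rw [sum_eq_single_of_mem f.natDegree (mem_Icc.2 ⟨hjn, le_rfl⟩)]
  · have htop := (hu.pow j).mul (hv.pow (f.natDegree - (j + 1)))
    rw [Monic, leadingCoeff, natDegree_pow_mul_pow_of_monic hu hv hud hvd,
      show j + (f.natDegree - (j + 1)) = f.natDegree - 1 by omega] at htop
    rw [htop, mul_one, leadingCoeff]
  · intro i hi hin
    refine mul_eq_zero_of_right _ (coeff_eq_zero_of_natDegree_lt ?_)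
    rw [natDegree_pow_mul_pow_of_monic hu hv hud hvd]
    have := mem_Icc.1 hi
    exact Nat.mul_lt_mul_of_pos_left (by omega) hd

end Degree

end DividedDifference

section EvenOdd

variable {R : Type*} [CommSemiring R]

theorem expand_contract_two_add (p : R[X]) :
    expand R 2 (contract 2 p) + X * expand R 2 (contract 2 p.divX) = p := by
  ext k
  rw [coeff_add, coeff_expand two_pos, coeff_contract two_ne_zero]
  obtain _ | k := k
  · simp
  rw [coeff_X_mul, coeff_expand two_pos, coeff_contract two_ne_zero, coeff_divX]
  obtain hk | hk := k.even_or_odd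
  · rw [if_neg (by grind), if_pos hk.two_dvd, zero_add, Nat.div_mul_cancel hk.two_dvd]
  · have hk' : 2 ∣ k + 1 := hk.add_one.two_dvd
    rw [if_pos hk', if_neg (by grind), add_zero, Nat.div_mul_cancel hk']

theorem eval_eq_contract_two (p : R[X]) (x : R) :
    p.eval x = (contract 2 p).eval (x ^ 2) + x * (contract 2 p.divX).eval (x ^ 2) := by
  conv_lhs => rw [← expand_contract_two_add p]
  simp only [eval_add, eval_mul, eval_X, expand_eval]

theorem eval_add_eval_neg {R : Type*} [CommRing R] (p : R[X]) (x : R) :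
    p.eval x + p.eval (-x) = 2 * (contract 2 p).eval (x ^ 2) := by
  rw [eval_eq_contract_two p x, eval_eq_contract_two p (-x), neg_sq]
  ring

theorem eval_sub_eval_neg {R : Type*} [CommRing R] (p : R[X]) (x : R) :
    p.eval x - p.eval (-x) = x * (2 * (contract 2 p.divX).eval (x ^ 2)) := by
  rw [eval_eq_contract_two p x, eval_eq_contract_two p (-x), neg_sq]
  ring

theorem degree_contract_two_lt {p : R[X]} {n : ℕ} (hp : p.degree < (2 * n : ℕ)) :
    (contract 2 p).degree < n := by
  rw [degree_lt_iff_coeff_zero] at hp ⊢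
  intro k hk
  rw [coeff_contract two_ne_zero]
  exact hp _ (by omega)

theorem degree_contract_two_divX_lt {p : R[X]} {n : ℕ} (hp : p.degree < (2 * n : ℕ)) :
    (contract 2 p.divX).degree < n := by
  rw [degree_lt_iff_coeff_zero] at hp ⊢
  intro k hk
  rw [coeff_contract two_ne_zero, coeff_divX]
  exact hp _ (by omega)

end EvenOdd

section Interpolation

variable {ι K : Type*} [DecidableEq ι] [Field K] {s : Finset ι} {l : ι → K} {p : K[X]}

theorem sum_eval_add_eval_neg_div (hl : Set.InjOn (fun c ↦ l c ^ 2) s)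
    (hp : p.degree < (2 * #s : ℕ)) :
    ∑ c ∈ s, (p.eval (l c) + p.eval (-l c)) / ∏ b ∈ s.erase c, (l c ^ 2 - l b ^ 2)
      = 2 * p.coeff (2 * (#s - 1)) := by
  have hlag := Lagrange.coeff_eq_sum hl (degree_contract_two_lt hp)
  rw [coeff_contract two_ne_zero, mul_comm] at hlag
  rw [hlag, mul_sum]
  exact sum_congr rfl fun c _ ↦ by rw [eval_add_eval_neg, mul_div_assoc]

theorem sum_eval_sub_eval_neg_div (h0 : ∀ c ∈ s, l c ≠ 0) (hl : Set.InjOn (fun c ↦ l c ^ 2) s)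
    (hp : p.degree < (2 * #s : ℕ)) :
    ∑ c ∈ s, (p.eval (l c) - p.eval (-l c)) / (l c * ∏ b ∈ s.erase c, (l c ^ 2 - l b ^ 2))
      = 2 * p.coeff (2 * (#s - 1) + 1) := by
  have hlag := Lagrange.coeff_eq_sum hl (degree_contract_two_divX_lt hp)
  rw [coeff_contract two_ne_zero, mul_comm, coeff_divX] at hlag
  rw [hlag, mul_sum]
  exact sum_congr rfl fun c hc ↦ by
    rw [eval_sub_eval_neg, mul_div_mul_left _ _ (h0 c hc), mul_div_assoc]

end Interpolation

section Weights

variable {ι K : Type*} [Field K] {s : Finset ι} {l : ι → K}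

/-- The polynomial whose values at `±l c` are the numerators of the reciprocal weights,
simultaneously for all nodes `c`. -/
noncomputable def numeratorPoly (s : Finset ι) (m : K) (l : ι → K) : K[X] :=
  dividedDiff ((∏ b ∈ s, (X - C (l b ^ 2))).map C) ((X - C m) ^ 2) (X ^ 2)

theorem coeff_numeratorPoly_eq_zero (s : Finset ι) (m : K) (l : ι → K) {k : ℕ}
    (hk : 2 * #s < k + 2) : (numeratorPoly s m l).coeff k = 0 :=
  coeff_dividedDiff_map_C_eq_zero ((monic_X_sub_C m).pow 2) (monic_X_pow 2)
    (by rw [natDegree_pow, natDegree_X_sub_C]) (natDegree_X_pow 2)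
    (∏ b ∈ s, (X - C (l b ^ 2))) (by rwa [natDegree_finsetProd_X_sub_C_eq_card])

theorem degree_numeratorPoly_lt (s : Finset ι) (m : K) (l : ι → K) :
    (numeratorPoly s m l).degree < (2 * #s : ℕ) :=
  (degree_lt_iff_coeff_zero _ _).2 fun _ hk ↦ coeff_numeratorPoly_eq_zero s m l (by omega)

theorem coeff_numeratorPoly (s : Finset ι) (m : K) (l : ι → K) :
    (numeratorPoly s m l).coeff (2 * (#s - 1)) = #s := by
  have h := coeff_dividedDiff_map_C ((monic_X_sub_C m).pow 2) (monic_X_pow 2)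
    (by rw [natDegree_pow, natDegree_X_sub_C]) (natDegree_X_pow 2) two_pos
    (∏ b ∈ s, (X - C (l b ^ 2)))
  rwa [natDegree_finsetProd_X_sub_C_eq_card, (monic_prod_X_sub_C _ s).leadingCoeff, mul_one] at h

variable [DecidableEq ι]

/-- The reciprocal weights of the identities. With `m = 2μ`, the node `c` has
`1 / w_c = recipWeight s m l c (l c)` and `1 / w_{n+c} = recipWeight s m l c (-l c)`. -/
def recipWeight (s : Finset ι) (m : K) (l : ι → K) (c : ι) (x : K) : K :=
  ∏ b ∈ s.erase c, ((x - m) ^ 2 - l b ^ 2) / (l c ^ 2 - l b ^ 2)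

theorem recipWeight_eq_eval_div {c : ι} (hc : c ∈ s) (m : K) {x : K} (hx : x ^ 2 = l c ^ 2) :
    recipWeight s m l c x
      = (numeratorPoly s m l).eval x / ∏ b ∈ s.erase c, (l c ^ 2 - l b ^ 2) := by
  rw [recipWeight, prod_div_distrib, numeratorPoly, eval_dividedDiff_map_C]
  simp only [eval_pow, eval_sub, eval_X, eval_C, hx]
  rw [dividedDiff_prod_X_sub_C hc fun b ↦ l b ^ 2]

theorem sum_recipWeight_add (hl : Set.InjOn (fun c ↦ l c ^ 2) s) (m : K) :
    ∑ c ∈ s, (recipWeight s m l c (l c) + recipWeight s m l c (-l c)) = 2 * #s := by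
  rw [← coeff_numeratorPoly s m l, ← sum_eval_add_eval_neg_div hl (degree_numeratorPoly_lt s m l)]
  refine sum_congr rfl fun c hc ↦ ?_
  rw [recipWeight_eq_eval_div hc m rfl, recipWeight_eq_eval_div hc m (neg_sq _), add_div]

theorem sum_recipWeight_sub_div (h0 : ∀ c ∈ s, l c ≠ 0) (hl : Set.InjOn (fun c ↦ l c ^ 2) s)
    (m : K) :
    ∑ c ∈ s, (recipWeight s m l c (l c) - recipWeight s m l c (-l c)) / l c = 0 := by
  have h := sum_eval_sub_eval_neg_div h0 hl (degree_numeratorPoly_lt s m l)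
  rw [coeff_numeratorPoly_eq_zero s m l (by omega), mul_zero] at h
  rw [← h]
  refine sum_congr rfl fun c hc ↦ ?_
  rw [recipWeight_eq_eval_div hc m rfl, recipWeight_eq_eval_div hc m (neg_sq _), ← sub_div,
    div_div, mul_comm (l c)]

theorem sum_one_sub_div_mul_recipWeight (h0 : ∀ c ∈ s, l c ≠ 0)
    (hl : Set.InjOn (fun c ↦ l c ^ 2) s) (m ν : K) :
    ∑ c ∈ s, ((1 - ν / l c) * recipWeight s m l c (l c)
      + (1 + ν / l c) * recipWeight s m l c (-l c)) = 2 * #s := by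
  calc
    _ = ∑ c ∈ s, (recipWeight s m l c (l c) + recipWeight s m l c (-l c))
          - ν * ∑ c ∈ s, (recipWeight s m l c (l c) - recipWeight s m l c (-l c)) / l c := by
      rw [mul_sum, ← sum_sub_distrib]
      exact sum_congr rfl fun c _ ↦ by ring
    _ = 2 * #s := by
      rw [sum_recipWeight_add hl, sum_recipWeight_sub_div h0 hl, mul_zero, sub_zero]

end Weights

-- Here `m = 2μ`, `vm a = 1 / w_a` and `vp a = 1 / w_{n+a}`; unlike the weights `w`, these are
-- finite for every `m`.
theorem stmt2_general {ι K : Type*} [DecidableEq ι] [Field K] {s : Finset ι} (m ν : K) {l : ι → K}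
    (h0 : ∀ c ∈ s, l c ≠ 0) (hl : Set.InjOn (fun c ↦ l c ^ 2) s) :
    let vm : ι → K := fun a ↦
      ∏ b ∈ s.erase a, (m - (l a - l b)) * (m - (l a + l b)) / ((l a - l b) * (l a + l b))
    let vp : ι → K := fun a ↦
      ∏ b ∈ s.erase a, (m + l a - l b) * (m + l a + l b) / ((l a - l b) * (l a + l b))
    (∑ c ∈ s, ((1 - ν / l c) * vm c + (1 + ν / l c) * vp c) = 2 * #s) ∧
      (∑ c ∈ s, ((-1 + (m - ν) / l c) * vm c + (-1 - (m - ν) / l c) * vp c)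
        = -(2 * #s)) := by
  intro vm vp
  have hvm (c : ι) : vm c = recipWeight s m l c (l c) :=
    prod_congr rfl fun b _ ↦ by ring
  have hvp (c : ι) : vp c = recipWeight s m l c (-l c) :=
    prod_congr rfl fun b _ ↦ by ring
  simp only [hvm, hvp]
  refine ⟨sum_one_sub_div_mul_recipWeight h0 hl m ν, ?_⟩
  -- The second identity is the negative of the first, with `m - ν` in place of `ν`.
  rw [← sum_one_sub_div_mul_recipWeight h0 hl m (m - ν), ← sum_neg_distrib]
  exact sum_congr rfl fun c _ ↦ by ring

/-- The identities (2.107) of the thesis: `Σ F_k^+ = 2n` and `Σ F_k^- = -2n`. -/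
theorem stmt2 (n : ℕ) (hn : 1 ≤ n) (μ ν : ℝ) (lam : Fin n → ℝ)
    (h0 : ∀ c, lam c ≠ 0)
    (h1 : ∀ a b : Fin n, a ≠ b → lam a ^ 2 ≠ lam b ^ 2)
    (h2 : ∀ a b : Fin n, a ≠ b →
      2 * μ ≠ lam a - lam b ∧ 2 * μ ≠ -(lam a - lam b) ∧
        2 * μ ≠ lam a + lam b ∧ 2 * μ ≠ -(lam a + lam b)) :
    let wm : Fin n → ℝ := fun a =>
      ∏ b ∈ Finset.univ.erase a,
        (lam a - lam b) * (lam a + lam b) /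
          ((2 * μ - (lam a - lam b)) * (2 * μ - (lam a + lam b)))
    let wp : Fin n → ℝ := fun a =>
      ∏ b ∈ Finset.univ.erase a,
        (lam a - lam b) * (lam a + lam b) /
          ((2 * μ + lam a - lam b) * (2 * μ + lam a + lam b))
    (∑ c, ((1 - ν / lam c) / wm c + (1 + ν / lam c) / wp c) = 2 * (n : ℝ)) ∧
      (∑ c, ((-1 + (2 * μ - ν) / lam c) / wm c + (-1 - (2 * μ - ν) / lam c) / wp c)
        = -(2 * (n : ℝ))) := by
  simpa only [div_eq_mul_inv _ (∏ _ ∈ _, _), ← prod_inv_distrib, inv_div, card_univ,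
    Fintype.card_fin] using stmt2_general (s := univ) (2 * μ) ν (fun c _ ↦ h0 c)
      fun a _ b _ hab ↦ by_contra fun hne ↦ h1 a b hne hab
end

section
/- For every integer n ≥ 1 and every q ∈ ℝⁿ with π/2 > q₁ > … > q_n > 0, the n×n real matrix X with entries X_{a,b} = (−1)^{a+1} · 2 · sin(2 a q_b) (a, b = 1,…,n) satisfies det X = (−1)^{n(n+3)/2} · 2^{n(n+1)/2} · ∏_{b=1}^{n} sin(2 q_b) · ∏_{1 ≤ b < c ≤ n} (cos(2 q_c) − cos(2 q_b)); in particular det X ≠ 0. -/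
/-!
By `sin ((k + 1) θ) = U_k(cos θ) sin θ`, the matrix `sin ((i + 1) θ_j)` is, up to the column factors
`sin θ_j`, the transpose of the matrix of values of the Chebyshev polynomials `U_0, …, U_{n-1}` at
the points `cos θ_j`. Since `U_k` has degree `k` and leading coefficient `2 ^ k`, column operations
reduce that matrix to the Vandermonde matrix of the `cos θ_j`.
-/

open Polynomial Matrix

section Vandermonde

variable {R : Type*} [CommRing R] {n : ℕ}

theorem det_vandermonde_eq_prod_filter_lt (v : Fin n → R) :
    (vandermonde v).det =
      ∏ p ∈ (Finset.univ : Finset (Fin n × Fin n)).filter fun p => p.1 < p.2,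
        (v p.2 - v p.1) := by
  simp_rw [det_vandermonde, Finset.prod_filter, Fintype.prod_prod_type, ← Finset.prod_filter,
    Finset.filter_lt_eq_Ioi]

theorem det_eval_eq_det_vandermonde_mul_prod_coeff (v : Fin n → R) (p : Fin n → R[X])
    (hp : ∀ i, (p i).natDegree ≤ i) :
    (of fun i j => (p j).eval (v i)).det = (vandermonde v).det * ∏ i, (p i).coeff i := by
  rw [eval_matrixOfPolynomials_eq_vandermonde_mul_matrixOfPolynomials v p hp, det_mul,
    det_of_isUpperTriangular (matrixOfPolynomials_blockTriangular p hp)]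
  rfl

theorem det_eval_chebyshev_U [IsDomain R] [NeZero (2 : R)] (v : Fin n → R) :
    (of fun i j : Fin n => (Chebyshev.U R (j : ℕ)).eval (v i)).det =
      2 ^ (n * (n - 1) / 2) * (vandermonde v).det := by
  have hcoeff (k : ℕ) : (Chebyshev.U R k).coeff k = 2 ^ k := by
    rw [← Chebyshev.leadingCoeff_U_natCast R k, leadingCoeff, Chebyshev.natDegree_U_natCast]
  rw [det_eval_eq_det_vandermonde_mul_prod_coeff v _
    fun i => (Chebyshev.natDegree_U_natCast R i).le]
  simp_rw [hcoeff]
  rw [Finset.prod_pow_eq_pow_sum, Fin.sum_univ_eq_sum_range fun i => i, Finset.sum_range_id,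
    mul_comm]

end Vandermonde

section SineMatrix

variable {n : ℕ} (θ : Fin n → ℝ)

/-- The matrix with rows `sin θ_j, sin (2 θ_j), …, sin (n θ_j)`; the shift by one in the frequency
comes from numbering the rows from zero. -/
noncomputable def sineMatrix : Matrix (Fin n) (Fin n) ℝ :=
  of fun i j => Real.sin (((i : ℕ) + 1) * θ j)

theorem det_sineMatrix :
    (sineMatrix θ).det =
      2 ^ (n * (n - 1) / 2) * (∏ j, Real.sin (θ j)) *
        (vandermonde fun j => Real.cos (θ j)).det := by
  have hU : sineMatrix θ = of fun i j => Real.sin (θ j) *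
      (of fun k l : Fin n => (Chebyshev.U ℝ (l : ℕ)).eval (Real.cos (θ k)))ᵀ i j := by
    ext i j
    simp only [sineMatrix, of_apply, transpose_apply]
    rw [mul_comm (Real.sin (θ j)), Chebyshev.U_real_cos, Int.cast_natCast]
  rw [hU, det_mul_row, det_transpose, det_eval_chebyshev_U]
  ring

theorem det_sineMatrix_ne_zero_iff :
    (sineMatrix θ).det ≠ 0 ↔
      (∀ j, Real.sin (θ j) ≠ 0) ∧ Function.Injective fun j => Real.cos (θ j) := by
  rw [det_sineMatrix, mul_assoc, mul_ne_zero_iff, mul_ne_zero_iff, and_iff_right (by positivity),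
    Finset.prod_ne_zero_iff, det_vandermonde_ne_zero_iff]
  simp only [Finset.mem_univ, true_implies]

end SineMatrix

theorem prod_fin_pow_add_two {M : Type*} [CommMonoid M] (x : M) (n : ℕ) :
    ∏ i : Fin n, x ^ ((i : ℕ) + 2) = x ^ (n * (n + 3) / 2) := by
  have hsum : ∑ i ∈ Finset.range n, (i + 2) = n * (n + 3) / 2 := by
    refine (Nat.div_eq_of_eq_mul_left two_pos ?_).symm
    induction n with
    | zero => rfl
    | succ n ih => rw [Finset.sum_range_succ]; linarith
  rw [Finset.prod_pow_eq_pow_sum, Fin.sum_univ_eq_sum_range fun i => i + 2, hsum]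

theorem mul_sub_one_div_two_add_self (n : ℕ) : n * (n - 1) / 2 + n = n * (n + 1) / 2 := by
  rw [← Finset.sum_range_id, ← Finset.sum_range_succ, Finset.sum_range_id,
    Nat.add_sub_cancel, mul_comm]

theorem sin_two_mul_ne_zero_of_mem_Ioo {x : ℝ} (hx : x ∈ Set.Ioo 0 (Real.pi / 2)) :
    Real.sin (2 * x) ≠ 0 :=
  (Real.sin_pos_of_pos_of_lt_pi (by linarith [hx.1]) (by linarith [hx.2])).ne'

theorem injOn_cos_two_mul_Icc :
    Set.InjOn (fun x : ℝ => Real.cos (2 * x)) (Set.Icc 0 (Real.pi / 2)) :=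
  Real.injOn_cos.comp (mul_right_injective₀ two_ne_zero).injOn fun x hx =>
    ⟨by linarith [hx.1], by linarith [hx.2]⟩

theorem stmt4_general (n : ℕ) (q : Fin n → ℝ) :
    let X : Matrix (Fin n) (Fin n) ℝ :=
      Matrix.of fun a b =>
        (-1 : ℝ) ^ ((a : ℕ) + 1 + 1) * 2 * Real.sin (2 * (((a : ℕ) : ℝ) + 1) * q b)
    (X.det = (-1 : ℝ) ^ (n * (n + 3) / 2) * 2 ^ (n * (n + 1) / 2) *
        (∏ b, Real.sin (2 * q b)) *
        ∏ p ∈ (Finset.univ : Finset (Fin n × Fin n)).filter fun p => p.1 < p.2,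
          (Real.cos (2 * q p.2) - Real.cos (2 * q p.1))) ∧
      (X.det ≠ 0 ↔
        (∀ b, Real.sin (2 * q b) ≠ 0) ∧ Function.Injective fun b => Real.cos (2 * q b)) := by
  intro X
  have hX : X = of fun a b : Fin n =>
      ((-1) ^ ((a : ℕ) + 2) * 2) * sineMatrix (fun b => 2 * q b) a b := by
    ext a b
    simp only [X, sineMatrix, of_apply]
    ring_nf
  have hdet : X.det =
      (-1) ^ (n * (n + 3) / 2) * 2 ^ n * (sineMatrix fun b => 2 * q b).det := by
    rw [hX, det_mul_column, Finset.prod_mul_distrib, prod_fin_pow_add_two,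
      Fin.prod_const]
  constructor
  · rw [hdet, det_sineMatrix, det_vandermonde_eq_prod_filter_lt, ← mul_sub_one_div_two_add_self,
      pow_add]
    ring
  · rw [hdet, ← det_sineMatrix_ne_zero_iff, mul_ne_zero_iff, and_iff_right (by positivity)]

/-- Proposition 2.17 of the thesis: the explicit Vandermonde-type evaluation of the
Jacobian determinant, which is nonvanishing on the alcove `π/2 > q₁ > … > q_n > 0`. -/
theorem stmt4 (n : ℕ) (hn : 1 ≤ n) (q : Fin n → ℝ)
    (hq1 : ∀ i, q i < Real.pi / 2) (hdec : ∀ i j : Fin n, i < j → q j < q i)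
    (hpos : ∀ i, 0 < q i) :
    let X : Matrix (Fin n) (Fin n) ℝ :=
      Matrix.of fun a b =>
        (-1 : ℝ) ^ ((a : ℕ) + 1 + 1) * 2 * Real.sin (2 * (((a : ℕ) : ℝ) + 1) * q b)
    (X.det = (-1 : ℝ) ^ (n * (n + 3) / 2) * 2 ^ (n * (n + 1) / 2) *
        (∏ b, Real.sin (2 * q b)) *
        ∏ p ∈ (Finset.univ : Finset (Fin n × Fin n)).filter fun p => p.1 < p.2,
          (Real.cos (2 * q p.2) - Real.cos (2 * q p.1))) ∧
      X.det ≠ 0 := by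
  exact (stmt4_general n q).imp_right fun h => h.2
    ⟨fun b => sin_two_mul_ne_zero_of_mem_Ioo ⟨hpos b, hq1 b⟩,
      fun b c hbc => StrictAnti.injective (fun i j => hdec i j) <|
        injOn_cos_two_mul_Icc ⟨(hpos b).le, (hq1 b).le⟩ ⟨(hpos c).le, (hq1 c).le⟩ hbc⟩
end

section
/- For every integer r ≥ 0 and every real number α, 2^r · cos(α)^r · sin(α) = Σ_{s=0}^{⌊r/2⌋} [ C(r,s) − C(r,s−1) ] · sin((r − 2s + 1)α), where C(r,s) denotes the binomial coefficient 'r choose s' with the convention C(r,−1) = 0. -/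
/-!
The sequence `g n = sin (n α)` satisfies `2 cos α * g n = g (n + 1) + g (n - 1)`, so multiplying
`r` times by `2 cos α` takes an `r`-step walk on `ℤ`, and `(2 cos α) ^ r * g 1` is the sum of
`C(r, s) * g (r - 2s + 1)` over `0 ≤ s ≤ r`. Since `g` is odd, the terms with `s > r / 2` fold back
onto the others: `t = r + 1 - s` has `g (r - 2s + 1) = -g (r - 2t + 1)` and `C(r, s) = C(r, t - 1)`,
and the fixed point `s = (r + 1) / 2`, present for odd `r`, contributes a multiple of `g 0 = 0`.
-/

open Finset

theorem pow_smul_eq_sum_choose_nsmul {R M : Type*} [Monoid R] [AddCommMonoid M]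
    [DistribMulAction R M] {a : R} {g : ℤ → M} (hg : ∀ n, a • g n = g (n + 1) + g (n - 1))
    (r : ℕ) (m : ℤ) :
    a ^ r • g m = ∑ s ∈ range (r + 1), r.choose s • g (r - 2 * s + m) := by
  induction r with
  | zero => simp
  | succ r ih =>
    have step (s : ℕ) : a • r.choose s • g (r - 2 * s + m) =
        r.choose s • g ((r + 1 : ℕ) - 2 * s + m) +
          r.choose s • g ((r + 1 : ℕ) - 2 * (s + 1 : ℕ) + m) := by
      rw [smul_comm, hg, nsmul_add]
      congr 3 <;> push_cast <;> ring
    rw [pow_succ', mul_smul, ih, smul_sum, sum_congr rfl fun s _ ↦ step s, sum_add_distrib]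
    exact (sum_choose_succ_nsmul (fun s _ ↦ g ((r + 1 : ℕ) - 2 * s + m)) r).symm

section Odd

variable {M : Type*} [AddCommGroup M] {g : ℤ → M}

theorem sum_Ico_choose_nsmul_of_odd (hodd : g.Odd) (hzero : g 0 = 0) (r : ℕ) :
    ∑ s ∈ Ico (r / 2 + 1) (r + 1), r.choose s • g (r - 2 * s + 1) =
      -∑ s ∈ range (r / 2), r.choose s • g (r - 2 * (s + 1 : ℕ) + 1) := by
  have reflect {s : ℕ} (hs : s ≤ r) : r.choose (r - s) • g (r - 2 * (r - s : ℕ) + 1) =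
      -(r.choose s • g (r - 2 * (s + 1 : ℕ) + 1)) := by
    rw [Nat.choose_symm hs, ← smul_neg, ← hodd]
    congr 2
    push_cast [hs]
    ring
  have middle {s : ℕ} (hs : s < r - r / 2) (hs' : ¬ s < r / 2) :
      r.choose s • g (r - 2 * (s + 1 : ℕ) + 1) = 0 := by
    rw [show (r : ℤ) - 2 * (s + 1 : ℕ) + 1 = 0 by lia, hzero, nsmul_zero]
  calc ∑ s ∈ Ico (r / 2 + 1) (r + 1), r.choose s • g (r - 2 * s + 1)
    _ = ∑ s ∈ range (r - r / 2), r.choose (r - s) • g (r - 2 * (r - s : ℕ) + 1) := by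
      rw [range_eq_Ico, sum_Ico_reflect (fun s : ℕ ↦ r.choose s • g (r - 2 * s + 1)) 0 (by lia),
        show r + 1 - (r - r / 2) = r / 2 + 1 by lia, Nat.sub_zero]
    _ = -∑ s ∈ range (r - r / 2), r.choose s • g (r - 2 * (s + 1 : ℕ) + 1) := by
      rw [← sum_neg_distrib]
      exact sum_congr rfl fun s hs ↦ reflect (by have := mem_range.1 hs; lia)
    _ = -∑ s ∈ range (r / 2), r.choose s • g (r - 2 * (s + 1 : ℕ) + 1) := by
      congr 1
      refine (sum_subset (range_mono (by lia)) fun s hs hs' ↦ ?_).symm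
      exact middle (mem_range.1 hs) (mt mem_range.2 hs')

theorem sum_range_choose_nsmul_of_odd (hodd : g.Odd) (hzero : g 0 = 0) (r : ℕ) :
    ∑ s ∈ range (r + 1), r.choose s • g (r - 2 * s + 1) =
      ∑ s ∈ range (r / 2 + 1),
        ((r.choose s : ℤ) - if s = 0 then 0 else (r.choose (s - 1) : ℤ)) • g (r - 2 * s + 1) := by
  rw [← sum_range_add_sum_Ico _ (show r / 2 + 1 ≤ r + 1 by lia),
    sum_Ico_choose_nsmul_of_odd hodd hzero, ← sub_eq_add_neg]
  simp only [sub_smul, sum_sub_distrib, natCast_zsmul]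
  rw [sum_range_succ' (fun s ↦ (if s = 0 then 0 else (r.choose (s - 1) : ℤ)) • _)]
  simp

end Odd

theorem two_mul_cos_mul_sin_intCast_mul (α : ℂ) (n : ℤ) :
    2 * Complex.cos α * Complex.sin (n * α) =
      Complex.sin ((n + 1 : ℤ) * α) + Complex.sin ((n - 1 : ℤ) * α) := by
  push_cast
  rw [add_mul, sub_mul, one_mul, Complex.sin_add, Complex.sin_sub]
  ring

theorem stmt5_general (r : ℕ) (α : ℂ) :
    2 ^ r * Complex.cos α ^ r * Complex.sin α =
      ∑ s ∈ Finset.range (r / 2 + 1),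
        ((r.choose s : ℂ) - if s = 0 then 0 else (r.choose (s - 1) : ℂ)) *
          Complex.sin (((r : ℂ) - 2 * s + 1) * α) := by
  let g (n : ℤ) : ℂ := Complex.sin (n * α)
  have hodd : g.Odd := fun n ↦ by simp [g]
  have hzero : g 0 = 0 := by simp [g]
  calc 2 ^ r * Complex.cos α ^ r * Complex.sin α
    _ = (2 * Complex.cos α) ^ r • g 1 := by simp [g, mul_pow]
    _ = ∑ s ∈ range (r + 1), r.choose s • g (r - 2 * s + 1) :=
      pow_smul_eq_sum_choose_nsmul (two_mul_cos_mul_sin_intCast_mul α) r 1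
    _ = ∑ s ∈ range (r / 2 + 1),
        ((r.choose s : ℤ) - if s = 0 then 0 else (r.choose (s - 1) : ℤ)) • g (r - 2 * s + 1) :=
      sum_range_choose_nsmul_of_odd hodd hzero r
    _ = _ := by simp [g]

/-- The trigonometric identity (2.210) of the thesis, provable via de Moivre's formula. -/
theorem stmt5 (r : ℕ) (α : ℝ) :
    2 ^ r * Real.cos α ^ r * Real.sin α =
      ∑ s ∈ Finset.range (r / 2 + 1),
        ((r.choose s : ℝ) - if s = 0 then 0 else (r.choose (s - 1) : ℝ)) *
          Real.sin (((r : ℝ) - 2 * s + 1) * α) := by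
  apply Complex.ofReal_injective
  simpa [apply_ite Complex.ofReal] using stmt5_general r α
end

section
/- Fix integers n ≥ 1 and 1 ≤ l ≤ n. Then for every q ∈ ℝⁿ, (−1)^l · 𝓗_l^{(n)}(q) = 𝓚_l^{(n)}(q) + Σ_{m=0}^{l−1} ( 2(n−m)/(2n−l−m) ) · C(2n−l−m, l−m) · 𝓚_m^{(n)}(q), where C(·,·) denotes binomial coefficients (note that 2n−l−m ≥ 1 for 0 ≤ m ≤ l−1 ≤ n−1, so all coefficients are well defined). -/
/-- The action-angle transform `𝓗_l^{(n)}` of van Diejen's `l`-th commuting Hamiltonian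
for the rational BC_n Ruijsenaars-Schneider system: the sum runs over all pairs of a
subset `J ⊆ {1,…,n}` with `|J| ≤ l` and a sign assignment `ε : J → {±1}`. -/
noncomputable def Hfam (n l : ℕ) (q : Fin n → ℝ) : ℝ :=
  ∑ J : Finset (Fin n), ∑ ε : {x // x ∈ J} → Bool,
    if J.card ≤ l then
      (-2 : ℝ) ^ (l - J.card) * ((n - J.card).choose (l - J.card) : ℝ) *
        Real.cosh (∑ j : {x // x ∈ J}, if ε j then q j.1 else -(q j.1))
    else 0

/-- The action-angle transform `𝓚_m^{(n)}` of the `m`-th coefficient of the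
characteristic polynomial of Pusztai's Lax matrix. -/
noncomputable def Kfam (n m : ℕ) (q : Fin n → ℝ) : ℝ :=
  (-1 : ℝ) ^ m *
    ∑ a ∈ Finset.range (m / 2 + 1), ∑ J : Finset (Fin n), ∑ ε : {x // x ∈ J} → Bool,
      if J.card = m - 2 * a then
        ((n - (m - 2 * a)).choose a : ℝ) *
          Real.cosh (∑ j : {x // x ∈ J}, if ε j then q j.1 else -(q j.1))
      else 0

/-!
`𝓗_l` and `𝓚_m` are both linear combinations of the sums `E_k` of `cosh q_{εJ}` over `|J| = k`, so
the claim is an identity between binomial coefficients for each `E_k`. Let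
`β = (1 + √(1 + 4X)) / 2`, a power series satisfying `β² = β + X`. The coefficient of `𝓚_m` in the
theorem is the coefficient of `X ^ (l - m)` in `β ^ (2n - 2m)`. Since `β - X β⁻¹ = 1`, squaring
gives `1 + 2X = β² + X² β⁻²`, and the required identity is the coefficient of `X ^ L` in
`(1 + 2X) ^ N = ∑ₐ C(N, a) X ^ (2a) β ^ (2N - 4a)` for `N = n - k`, `L = l - k`.
-/

open Finset PowerSeries

section BinomialRing

variable {R : Type*} [CommRing R] [BinomialRing R]

/-- The coefficient of `X ^ k` in `((1 + √(1 + 4X)) / 2) ^ x`, that is `x / (x - k) * C(x - k, k)`,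
written without division so that it makes sense for all `x`. For a natural number `x > 0` and
`2 * k ≤ x` these are the coefficients of the Lucas polynomial of index `x`. -/
def lucasCoeff (x : R) : ℕ → R
  | 0 => 1
  | k + 1 => Ring.choose (x - k - 1) (k + 1) + Ring.choose (x - k - 2) k

@[simp]
theorem lucasCoeff_zero_right (x : R) : lucasCoeff x 0 = 1 := rfl

theorem sub_mul_lucasCoeff (x : R) (k : ℕ) :
    (x - k) * lucasCoeff x k = x * Ring.choose (x - k) k := by
  obtain _ | k := k
  · simp
  have absorption : (k + 1) * Ring.choose (x - k - 1) (k + 1) =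
      (x - k - 1) * Ring.choose (x - k - 2) k := by
    have h := Ring.choose_smul_choose (x - k - 1) (Nat.le_add_left 1 k)
    rw [Nat.choose_one_right, Ring.choose_one_right, Nat.add_sub_cancel, nsmul_eq_mul,
      Nat.cast_one, sub_sub _ 1 1, one_add_one_eq_two] at h
    exact_mod_cast h
  simp only [lucasCoeff, Nat.cast_add, Nat.cast_one, ← sub_sub]
  linear_combination -absorption

theorem lucasCoeff_zero_succ (k : ℕ) : lucasCoeff (0 : R) (k + 1) = 0 := by
  have := BinomialRing.toIsAddTorsionFree (R := R)
  have h : (k + 1) • lucasCoeff (0 : R) (k + 1) = 0 := by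
    simpa only [zero_sub, zero_mul, neg_mul, neg_eq_zero, ← nsmul_eq_mul] using
      sub_mul_lucasCoeff (0 : R) (k + 1)
  exact (smul_eq_zero.1 h).resolve_left k.succ_ne_zero

theorem lucasCoeff_add_two_succ (x : R) (k : ℕ) :
    lucasCoeff (x + 2) (k + 1) = lucasCoeff (x + 1) (k + 1) + lucasCoeff x k := by
  obtain _ | k := k
  · simp only [lucasCoeff, zero_add, Ring.choose_one_right, Ring.choose_zero_right]
    ring
  · have pascal₁ := Ring.choose_succ_succ (x - k - 1) (k + 1)
    have pascal₂ := Ring.choose_succ_succ (x - k - 2) k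
    simp only [lucasCoeff, Nat.cast_add, Nat.cast_one]
    ring_nf at pascal₁ pascal₂ ⊢
    linear_combination pascal₁ + pascal₂

/-- The power series `β ^ x` with `β = (1 + √(1 + 4X)) / 2`, defined by its coefficients. It is
handled only through `β ^ 0 = 1` and `β ^ (x + 2) = β ^ (x + 1) + X β ^ x`, so that no powers with
exponents in `R` are needed. -/
def lucasSeries (x : R) : R⟦X⟧ :=
  mk (lucasCoeff x)

theorem lucasSeries_zero : lucasSeries (0 : R) = 1 := by
  ext (_ | k)
  · simp [lucasSeries]
  · simp [lucasSeries, lucasCoeff_zero_succ, coeff_one]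

theorem lucasSeries_add_two (x : R) :
    lucasSeries (x + 2) = lucasSeries (x + 1) + X * lucasSeries x := by
  ext (_ | k)
  · simp [lucasSeries]
  · simp [lucasSeries, coeff_succ_X_mul, lucasCoeff_add_two_succ]

theorem one_add_two_mul_X_mul_lucasSeries (x : R) :
    (1 + 2 * X) * lucasSeries x = lucasSeries (x + 2) + X ^ 2 * lucasSeries (x + -2) := by
  have h₀ := lucasSeries_add_two x
  have h₁ := lucasSeries_add_two (x - 1)
  have h₂ := lucasSeries_add_two (x + -2)
  rw [show x - 1 + 2 = x + 1 by ring, show x - 1 + 1 = x by ring] at h₁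
  rw [show x + -2 + 2 = x by ring, show x + -2 + 1 = x - 1 by ring] at h₂
  linear_combination -h₀ - h₁ + X * h₂

/- The binomial theorem for the commuting operators "shift by `s`" and "`y` times shift by `t`". -/
theorem pow_mul_eq_sum_choose_of_shift {G A : Type*} [AddCommMonoid G] [CommSemiring A]
    {f : G → A} {c y : A} {s t : G} (h : ∀ x, c * f x = f (x + s) + y * f (x + t))
    (n : ℕ) (x : G) :
    c ^ n * f x =
      ∑ a ∈ range (n + 1), (n.choose a : A) * (y ^ a * f (x + (n - a) • s + a • t)) := by
  induction n generalizing x with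
  | zero => simp
  | succ n ih =>
    rw [sum_choose_succ_mul (fun a b ↦ y ^ a * f (x + b • s + a • t)) n, pow_succ, mul_assoc, h,
      mul_add, mul_left_comm, ih, ih, mul_sum]
    congr 1 <;> refine sum_congr rfl fun a ha ↦ ?_
    · rw [Nat.sub_add_comm (mem_range_succ_iff.1 ha), succ_nsmul', ← add_assoc x]
    · rw [succ_nsmul', pow_succ', add_right_comm x t, ← add_assoc (x + _) t]
      ring

theorem coeff_one_add_two_mul_X_pow (n l : ℕ) :
    coeff l ((1 + 2 * X : R⟦X⟧) ^ n) = 2 ^ l * n.choose l := by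
  have h : (1 + 2 * X : R⟦X⟧) ^ n = rescale 2 ((1 + X) ^ n) := by
    rw [map_pow, map_add, map_one, rescale_X, map_ofNat]
  rw [h, coeff_rescale, ← binomialSeries_nat (R := R), binomialSeries_coeff, Ring.choose_natCast,
    smul_eq_mul, mul_one]

theorem two_pow_mul_choose_eq_sum_lucasCoeff (n l : ℕ) :
    (2 : R) ^ l * n.choose l =
      ∑ a ∈ range (l / 2 + 1), (n.choose a : R) * lucasCoeff (2 * n - 4 * a : R) (l - 2 * a) := by
  have expansion := pow_mul_eq_sum_choose_of_shift one_add_two_mul_X_mul_lucasSeries n (0 : R)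
  rw [lucasSeries_zero, mul_one] at expansion
  rw [← coeff_one_add_two_mul_X_pow, expansion, map_sum]
  simp only [← map_natCast (C (R := R)), coeff_C_mul, ← pow_mul, coeff_X_pow_mul',
    lucasSeries, coeff_mk]
  refine sum_congr_of_eq_on_inter (fun a _ ha ↦ ?_) (fun a _ ha ↦ ?_) fun a han hal ↦ ?_
  · rw [mem_range] at ha
    rw [if_neg (by lia), mul_zero]
  · rw [mem_range] at ha
    rw [Nat.choose_eq_zero_of_lt (by lia), Nat.cast_zero, zero_mul]
  · rw [mem_range] at hal
    rw [if_pos (by lia), nsmul_eq_mul, nsmul_eq_mul, Nat.cast_sub (mem_range_succ_iff.1 han)]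
    ring_nf

theorem sum_range_sum_range_half {M : Type*} [AddCommMonoid M] (f : ℕ → ℕ → M) (l : ℕ) :
    ∑ m ∈ range (l + 1), ∑ a ∈ range (m / 2 + 1), f (m - 2 * a) a =
      ∑ k ∈ range (l + 1), ∑ a ∈ range ((l - k) / 2 + 1), f k a := by
  rw [sum_sigma', sum_sigma']
  refine sum_nbij' (fun p ↦ ⟨p.1 - 2 * p.2, p.2⟩) (fun p ↦ ⟨p.1 + 2 * p.2, p.2⟩)
    ?_ ?_ ?_ ?_ fun _ _ ↦ rfl
  all_goals
    rintro ⟨k, a⟩ h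
    simp only [mem_sigma, mem_range, Sigma.mk.injEq, heq_eq_eq, and_true] at h ⊢
    lia

theorem neg_one_pow_mul_sum_choose_eq_sum_lucasCoeff {n l : ℕ} (hl : l ≤ n) (e : ℕ → R) :
    (-1) ^ l * ∑ k ∈ range (l + 1), (-2) ^ (l - k) * ((n - k).choose (l - k) : R) * e k =
      ∑ m ∈ range (l + 1), lucasCoeff (2 * n - 2 * m : R) (l - m) *
        ((-1) ^ m *
          ∑ a ∈ range (m / 2 + 1), ((n - (m - 2 * a)).choose a : R) * e (m - 2 * a)) := by
  let summand (k a : ℕ) : R := (-1) ^ k * ((n - k).choose a *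
    lucasCoeff (2 * ((n - k : ℕ) : R) - 4 * a) (l - k - 2 * a)) * e k
  calc
    _ = ∑ k ∈ range (l + 1), ∑ a ∈ range ((l - k) / 2 + 1), summand k a := by
      rw [mul_sum]
      refine sum_congr rfl fun k hk ↦ ?_
      rw [mem_range_succ_iff] at hk
      have sign : (-1 : R) ^ l * (-2) ^ (l - k) = (-1) ^ k * 2 ^ (l - k) := by
        rw [← Nat.add_sub_of_le hk, pow_add, mul_assoc, Nat.add_sub_cancel_left, ← mul_pow,
          neg_one_mul, neg_neg]
      rw [← sum_mul, ← mul_sum, ← two_pow_mul_choose_eq_sum_lucasCoeff, ← mul_assoc, ← mul_assoc,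
        sign, mul_assoc ((-1) ^ k)]
    _ = ∑ m ∈ range (l + 1), ∑ a ∈ range (m / 2 + 1), summand (m - 2 * a) a :=
      (sum_range_sum_range_half summand l).symm
    _ = _ := by
      simp only [mul_sum]
      refine sum_congr rfl fun m hm ↦ sum_congr rfl fun a ha ↦ ?_
      rw [mem_range_succ_iff] at hm
      obtain ⟨k, rfl⟩ : ∃ k, m = k + 2 * a := ⟨m - 2 * a, by rw [mem_range] at ha; lia⟩
      have hx : 2 * ((n - k : ℕ) : R) - 4 * a = 2 * n - 2 * (k + 2 * a : ℕ) := by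
        rw [Nat.cast_sub (by lia)]
        push_cast
        ring
      simp only [summand, Nat.add_sub_cancel, Nat.sub_sub, hx, pow_add, pow_mul, neg_one_sq,
        one_pow, mul_one]
      ring

end BinomialRing

theorem lucasCoeff_eq_div_mul_choose {K : Type*} [Field K] [BinomialRing K] {x : K} {k : ℕ}
    (hx : x ≠ k) : lucasCoeff x k = x / (x - k) * Ring.choose (x - k) k := by
  rw [div_mul_eq_mul_div, ← sub_mul_lucasCoeff, mul_div_cancel_left₀ _ (sub_ne_zero.2 hx)]

theorem lucasCoeff_two_mul_sub_two_mul {n l m : ℕ} (hm : m < l) (hl : l ≤ n) :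
    lucasCoeff (2 * n - 2 * m : ℝ) (l - m) =
      2 * ((n : ℝ) - m) / (2 * n - l - m) * ((2 * n - l - m).choose (l - m) : ℝ) := by
  have hcast : (2 * n - 2 * m - (l - m : ℕ) : ℝ) = (2 * n - l - m : ℕ) := by
    rw [Nat.cast_sub hm.le, Nat.cast_sub (by lia), Nat.cast_sub (by lia)]
    push_cast
    ring
  have hne : (2 * n - 2 * m : ℝ) ≠ (l - m : ℕ) := by
    rw [← sub_ne_zero, hcast, Nat.cast_ne_zero]
    lia
  rw [lucasCoeff_eq_div_mul_choose hne, hcast, Ring.choose_natCast, ← mul_sub,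
    Nat.cast_sub (by lia), Nat.cast_sub (by lia), Nat.cast_mul, Nat.cast_ofNat]

/-- The sum `E_k` of `cosh q_{εJ}` over all subsets `J` of size `k` and all signs `ε` on `J`, in
terms of which both `Hfam` and `Kfam` are expanded. -/
noncomputable def signedCoshSum (n k : ℕ) (q : Fin n → ℝ) : ℝ :=
  ∑ J : Finset (Fin n), ∑ ε : {x // x ∈ J} → Bool,
    if J.card = k then Real.cosh (∑ j : {x // x ∈ J}, if ε j then q j.1 else -(q j.1)) else 0

theorem Hfam_eq_sum_signedCoshSum (n l : ℕ) (q : Fin n → ℝ) :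
    Hfam n l q = ∑ k ∈ range (l + 1),
      (-2) ^ (l - k) * ((n - k).choose (l - k) : ℝ) * signedCoshSum n k q := by
  simp only [Hfam, signedCoshSum, mul_sum, mul_ite, mul_zero]
  rw [sum_comm]
  refine sum_congr rfl fun J _ ↦ ?_
  rw [sum_comm]
  refine sum_congr rfl fun ε _ ↦ ?_
  simp only [sum_ite_eq, mem_range_succ_iff]

theorem Kfam_eq_sum_signedCoshSum (n m : ℕ) (q : Fin n → ℝ) :
    Kfam n m q = (-1) ^ m * ∑ a ∈ range (m / 2 + 1),
      ((n - (m - 2 * a)).choose a : ℝ) * signedCoshSum n (m - 2 * a) q := by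
  simp only [Kfam, signedCoshSum, mul_sum, mul_ite, mul_zero]

/-- Proposition 2.19 of the thesis: `(-1)^l 𝓗_l` is an explicit linear combination of
`𝓚_0, …, 𝓚_l`. -/
theorem stmt6 (n l : ℕ) (hn : 1 ≤ n) (hl : 1 ≤ l) (hln : l ≤ n) (q : Fin n → ℝ) :
    (-1 : ℝ) ^ l * Hfam n l q =
      Kfam n l q +
        ∑ m ∈ Finset.range l,
          2 * ((n : ℝ) - (m : ℝ)) / (2 * (n : ℝ) - (l : ℝ) - (m : ℝ)) *
            ((2 * n - l - m).choose (l - m) : ℝ) * Kfam n m q := by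
  simp only [Hfam_eq_sum_signedCoshSum, Kfam_eq_sum_signedCoshSum]
  rw [neg_one_pow_mul_sum_choose_eq_sum_lucasCoeff hln, sum_range_succ, Nat.sub_self,
    lucasCoeff_zero_right, one_mul, add_comm]
  congr 1
  refine sum_congr rfl fun m hm ↦ ?_
  rw [lucasCoeff_two_mul_sub_two_mul (mem_range.1 hm) hln]
end

section
/- For all integers n ≥ 1 and 0 ≤ l ≤ n and every q ∈ ℝⁿ, 𝓗_l^{(n)}(q) = 4^l · e_l( sinh²(q₁/2), …, sinh²(q_n/2) ), where e_l denotes the l-th elementary symmetric polynomial in n variables (with e₀ = 1). -/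
/-
Since `4 sinh²(x/2) = 2 cosh x - 2`, homogeneity turns the right-hand side into the `l`-th
elementary symmetric polynomial in the variables `2 cosh q_j - 2`. Expanding each product over
an `l`-element set `K` gives terms indexed by subsets `J ⊆ K`, and a given `J` occurs once for
each of the `C(n - |J|, l - |J|)` sets `K` containing it. Finally `∏_{j ∈ J} 2 cosh q_j` is the
sum of `cosh q_{εJ}` over all signs `ε`.
-/

open Finset

theorem sum_powersetCard_prod_add_const {ι R : Type*} [CommSemiring R]
    (s : Finset ι) (l : ℕ) (x : ι → R) (c : R) :
    ∑ K ∈ powersetCard l s, ∏ j ∈ K, (x j + c) =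
      ∑ J ∈ s.powerset with #J ≤ l,
        c ^ (l - #J) * ((#s - #J).choose (l - #J) : R) * ∏ j ∈ J, x j := by
  classical
  have expand : ∀ K ∈ powersetCard l s, ∏ j ∈ K, (x j + c) =
      ∑ J ∈ K.powerset, c ^ (l - #J) * ∏ j ∈ J, x j := by
    intro K hK
    rw [prod_add]
    refine sum_congr rfl fun J hJ => ?_
    rw [prod_const, card_sdiff_of_subset (mem_powerset.mp hJ), (mem_powersetCard.mp hK).2,
      mul_comm]
  have mem_swap : ∀ K J, K ∈ powersetCard l s ∧ J ∈ K.powerset ↔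
      K ∈ {K ∈ powersetCard l s | J ⊆ K} ∧ J ∈ {J ∈ s.powerset | #J ≤ l} := by
    intro K J
    simp only [mem_filter, mem_powerset, mem_powersetCard]
    constructor
    · rintro ⟨⟨hKs, rfl⟩, hJK⟩
      exact ⟨⟨⟨hKs, rfl⟩, hJK⟩, hJK.trans hKs, card_le_card hJK⟩
    · rintro ⟨hK, -⟩
      exact hK
  rw [sum_congr rfl expand, sum_comm' mem_swap]
  refine sum_congr rfl fun J hJ => ?_
  obtain ⟨hJs, hJl⟩ := mem_filter.mp hJ
  rw [sum_const, card_filter_powersetCard_subset J s l (mem_powerset.mp hJs) hJl, nsmul_eq_mul]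
  ring

section SignedSums

variable {ι : Type*} [Fintype ι] [DecidableEq ι]

theorem sum_exp_signed_sum (f : ι → ℂ) :
    ∑ ε : ι → Bool, Complex.exp (∑ j, if ε j then f j else -f j) =
      ∏ j, 2 * Complex.cosh (f j) := by
  have two_cosh_eq_sum_bool (z : ℂ) :
      2 * Complex.cosh z = ∑ b : Bool, Complex.exp (if b then z else -z) := by
    rw [Complex.two_cosh, Fintype.sum_bool, if_pos rfl, if_neg Bool.false_ne_true]
  simp_rw [two_cosh_eq_sum_bool, Fintype.prod_sum, Complex.exp_sum]

theorem sum_cosh_signed_sum (f : ι → ℂ) :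
    ∑ ε : ι → Bool, Complex.cosh (∑ j, if ε j then f j else -f j) =
      ∏ j, 2 * Complex.cosh (f j) := by
  have signed_sum_neg (ε : ι → Bool) :
      -(∑ j, if ε j then f j else -f j) = ∑ j, if ε j then -f j else -(-f j) := by
    simp only [← sum_neg_distrib, neg_ite]
  have sum_exp_neg : ∑ ε : ι → Bool, Complex.exp (-(∑ j, if ε j then f j else -f j)) =
      ∏ j, 2 * Complex.cosh (f j) := by
    simp_rw [signed_sum_neg, sum_exp_signed_sum fun j => -f j, Complex.cosh_neg]
  apply mul_left_cancel₀ (two_ne_zero' ℂ)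
  simp_rw [mul_sum, Complex.two_cosh, sum_add_distrib, ← Complex.two_cosh]
  rw [sum_exp_signed_sum, sum_exp_neg, two_mul]

end SignedSums

theorem four_mul_sinh_half_sq (z : ℂ) :
    4 * Complex.sinh (z / 2) ^ 2 = 2 * Complex.cosh z - 2 := by
  have cosh_eq : Complex.cosh (2 * (z / 2)) = 2 * Complex.sinh (z / 2) ^ 2 + 1 := by
    rw [Complex.cosh_two_mul, Complex.cosh_sq]
    ring
  rw [mul_div_cancel₀ z two_ne_zero] at cosh_eq
  rw [cosh_eq]
  ring

theorem stmt7_general {ι : Type*} [DecidableEq ι] (s : Finset ι) (l : ℕ) (q : ι → ℂ) :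
    ∑ J ∈ s.powerset with #J ≤ l, ∑ ε : {x // x ∈ J} → Bool,
        (-2) ^ (l - #J) * ((#s - #J).choose (l - #J) : ℂ) *
          Complex.cosh (∑ j : {x // x ∈ J}, if ε j then q j.1 else -q j.1) =
      4 ^ l * ∑ K ∈ powersetCard l s, ∏ j ∈ K, Complex.sinh (q j / 2) ^ 2 := by
  have sum_signs (J : Finset ι) : ∑ ε : {x // x ∈ J} → Bool,
      Complex.cosh (∑ j : {x // x ∈ J}, if ε j then q j.1 else -q j.1) =
        ∏ j ∈ J, 2 * Complex.cosh (q j) := by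
    rw [sum_cosh_signed_sum fun j : {x // x ∈ J} => q j.1,
      prod_coe_sort J fun j => 2 * Complex.cosh (q j)]
  have absorb_four : ∀ K ∈ powersetCard l s, 4 ^ l * ∏ j ∈ K, Complex.sinh (q j / 2) ^ 2 =
      ∏ j ∈ K, (2 * Complex.cosh (q j) + -2) := by
    intro K hK
    simp_rw [← sub_eq_add_neg, ← four_mul_sinh_half_sq, prod_mul_distrib, prod_const,
      (mem_powersetCard.mp hK).2]
  simp_rw [← mul_sum, sum_signs]
  rw [mul_sum, sum_congr rfl absorb_four, sum_powersetCard_prod_add_const]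

/-- Proposition B.1 of the thesis (due to van Diejen): `𝓗_l^{(n)}(q)` equals
`4^l` times the `l`-th elementary symmetric function of `sinh²(q_i/2)`. -/
theorem stmt7 (n l : ℕ) (hn : 1 ≤ n) (hl : l ≤ n) (q : Fin n → ℝ) :
    Hfam n l q =
      4 ^ l * ∑ J ∈ Finset.powersetCard l (Finset.univ : Finset (Fin n)),
        ∏ j ∈ J, Real.sinh (q j / 2) ^ 2 := by
  apply Complex.ofReal_injective
  simpa [Hfam, sum_filter, apply_ite] using stmt7_general univ l fun j => (q j : ℂ)
end

section
/- Let x be a nonzero real number, n ≥ 2 an integer, and p̂ ∈ ℝⁿ with 0 ≥ p̂₁ ≥ p̂₂ ≥ … ≥ p̂_n. Suppose there exist a unitary n×n matrix T and a vector w ∈ ℂⁿ such that E₂ₓ + sgn(x) · E (w w*) E = T⁻¹ E₂ T, where E = diag(e^{p̂₁},…,e^{p̂_n}), E₂ = diag(e^{2p̂₁},…,e^{2p̂_n}) and E₂ₓ = diag(e^{2p̂₁−x},…,e^{2p̂_n−x}). Then p̂_k − p̂_{k+1} ≥ |x|/2 for every k = 1,…,n−1; in particular the components p̂₁,…,p̂_n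 are pairwise distinct. -/
/-!
Write the constraint as `T D_b - D_a T = R` with `T` unitary, `D_a`, `D_b` real diagonal and
`R` of rank one. A count of linear conditions gives a nonzero `y` with `R y = 0`, with `y` supported
on the indices `≥ k`, and with `T y` supported on the indices `≤ k + 1`. Then
`⟨y, D_b y⟩ = ⟨T y, D_a T y⟩`, and as the diagonal entries decrease, the left side is at most
`b_k ‖y‖²` and the right side at least `a_{k+1} ‖y‖²`. Hence `a_{k+1} ≤ b_k`, and `b_{k+1} ≤ a_k`
because the situation is symmetric under `T ↦ T*`. For `a_j = exp (2 p_j)` and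
`b_j = exp (2 p_j - x)` these are the bounds `± x ≤ 2 (p_k - p_{k+1})`. Nothing changes for `R` of
rank `r`, with `k + r` in place of `k + 1`.
-/

open Matrix
open scoped ComplexOrder Finset

section Rank

variable {l m n o K : Type*} [Fintype n] [CommRing K]

theorem rank_neg (A : Matrix m n K) : (-A).rank = A.rank := by
  rw [← neg_one_smul K, rank_smul_of_mem_nonZeroDivisors A isUnit_one.neg.mem_nonZeroDivisors]

theorem rank_smul_mul_vecMulVec_mul_le_one [Nontrivial K] [Fintype m] [Fintype o] (c : K)
    (A : Matrix l m K) (u : m → K) (v : n → K) (B : Matrix n o K) :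
    (c • (A * vecMulVec u v * B)).rank ≤ 1 := by
  rw [← Matrix.smul_mul, ← Matrix.smul_mul]
  exact (rank_mul_le_left _ _).trans <| (rank_mul_le_right _ _).trans <| rank_vecMulVec_le u v

end Rank

theorem exists_ne_zero_mulVec_eq_zero_of_card_add_rank_lt {ι κ μ K : Type*} [Fintype ι] [Field K]
    (A : Matrix κ ι K) (R : Matrix μ ι K) {I : Finset ι} {J : Finset κ}
    (h : #I + #J + R.rank < Fintype.card ι) :
    ∃ y ≠ 0, (∀ i ∈ I, y i = 0) ∧ (∀ j ∈ J, (A *ᵥ y) j = 0) ∧ R *ᵥ y = 0 := by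
  let L := ((LinearMap.funLeft K K ((↑) : I → ι)).prod
    (LinearMap.funLeft K K ((↑) : J → κ) ∘ₗ A.mulVecLin)).prod R.mulVecLin.rangeRestrict
  have hker : L.ker ≠ ⊥ := LinearMap.ker_ne_bot_of_finrank_lt <| by
    simpa [Module.finrank_prod, Matrix.rank] using h
  obtain ⟨y, hy, hy0⟩ := Submodule.exists_mem_ne_zero_of_ne_bot hker
  simp only [L, LinearMap.ker_prod, LinearMap.ker_rangeRestrict, Submodule.mem_inf,
    LinearMap.mem_ker, LinearMap.comp_apply, funext_iff, LinearMap.funLeft_apply,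
    mulVecLin_apply, Pi.zero_apply, Subtype.forall] at hy
  exact ⟨y, hy0, hy.1.1, hy.1.2, funext hy.2⟩

section WeightedSums

variable {ι : Type*} [Fintype ι] {f v : ι → ℝ} {c : ℝ}

theorem sum_mul_le_mul_sum_of_le_of_ne_zero (hv : 0 ≤ v) (h : ∀ j, v j ≠ 0 → f j ≤ c) :
    ∑ j, f j * v j ≤ c * ∑ j, v j := by
  rw [Finset.mul_sum]
  refine Finset.sum_le_sum fun j _ => ?_
  obtain hj | hj := eq_or_ne (v j) 0
  · simp [hj]
  · exact mul_le_mul_of_nonneg_right (h j hj) (hv j)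

theorem mul_sum_le_sum_mul_of_le_of_ne_zero (hv : 0 ≤ v) (h : ∀ j, v j ≠ 0 → c ≤ f j) :
    c * ∑ j, v j ≤ ∑ j, f j * v j := by
  simpa using sum_mul_le_mul_sum_of_le_of_ne_zero (f := -f) hv fun j hj => neg_le_neg (h j hj)

end WeightedSums

section Interlacing

variable {ι 𝕜 : Type*} [Fintype ι] [DecidableEq ι] [RCLike 𝕜] {T : Matrix ι ι 𝕜}

theorem star_dotProduct_diagonal_mulVec (d : ι → ℝ) (y : ι → 𝕜) :
    star y ⬝ᵥ (diagonal (fun j => (d j : 𝕜)) *ᵥ y) = ((∑ j, d j * ‖y j‖ ^ 2 : ℝ) : 𝕜) := by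
  simp only [dotProduct, mulVec_diagonal, Pi.star_apply, RCLike.star_def]
  push_cast
  refine Finset.sum_congr rfl fun j _ => ?_
  rw [← RCLike.conj_mul, mul_left_comm]

theorem star_mulVec_dotProduct_mulVec_of_mem_unitaryGroup (hT : T ∈ unitaryGroup ι 𝕜)
    (y z : ι → 𝕜) : star (T *ᵥ y) ⬝ᵥ (T *ᵥ z) = star y ⬝ᵥ z := by
  rw [star_mulVec, ← dotProduct_mulVec, mulVec_mulVec, ← star_eq_conjTranspose,
    mem_unitaryGroup_iff'.mp hT, one_mulVec]

theorem sum_norm_sq_mulVec_of_mem_unitaryGroup (hT : T ∈ unitaryGroup ι 𝕜) (y : ι → 𝕜) :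
    ∑ j, ‖(T *ᵥ y) j‖ ^ 2 = ∑ j, ‖y j‖ ^ 2 := by
  have h := star_mulVec_dotProduct_mulVec_of_mem_unitaryGroup hT y y
  simp only [dotProduct, Pi.star_apply, RCLike.star_def, RCLike.conj_mul] at h
  exact_mod_cast h

theorem sum_mul_norm_sq_mulVec_of_mulVec_eq_zero {a b : ι → ℝ} (hT : T ∈ unitaryGroup ι 𝕜)
    {y : ι → 𝕜} (hy : (T * diagonal (fun j => (b j : 𝕜)) -
      diagonal (fun j => (a j : 𝕜)) * T) *ᵥ y = 0) :
    ∑ j, a j * ‖(T *ᵥ y) j‖ ^ 2 = ∑ j, b j * ‖y j‖ ^ 2 := by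
  have hcomm : T *ᵥ (diagonal (fun j => (b j : 𝕜)) *ᵥ y) =
      diagonal (fun j => (a j : 𝕜)) *ᵥ (T *ᵥ y) := by
    simpa only [sub_mulVec, sub_eq_zero, ← mulVec_mulVec] using hy
  have h := star_mulVec_dotProduct_mulVec_of_mem_unitaryGroup hT y
    (diagonal (fun j => (b j : 𝕜)) *ᵥ y)
  rw [hcomm, star_dotProduct_diagonal_mulVec, star_dotProduct_diagonal_mulVec] at h
  exact_mod_cast h

theorem rank_star_mul_diagonal_sub_diagonal_mul_star (a b : ι → ℝ) (T : Matrix ι ι 𝕜) :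
    (star T * diagonal (fun l => (a l : 𝕜)) - diagonal (fun l => (b l : 𝕜)) * star T).rank =
      (T * diagonal (fun l => (b l : 𝕜)) - diagonal (fun l => (a l : 𝕜)) * T).rank := by
  have hstar (d : ι → ℝ) : star (fun l => (d l : 𝕜)) = fun l => (d l : 𝕜) :=
    funext fun _ => RCLike.conj_ofReal _
  rw [← rank_conjTranspose (T * _ - _), ← rank_neg, conjTranspose_sub, conjTranspose_mul,
    conjTranspose_mul, diagonal_conjTranspose, diagonal_conjTranspose, hstar, hstar, neg_sub,
    star_eq_conjTranspose]

variable {n r : ℕ} {a b : Fin n → ℝ} {U : Matrix (Fin n) (Fin n) 𝕜} {i j : Fin n}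

theorem le_of_rank_mul_diagonal_sub_diagonal_mul_le (ha : Antitone a) (hb : Antitone b)
    (hU : U ∈ unitaryGroup (Fin n) 𝕜)
    (hrank : (U * diagonal (fun l => (b l : 𝕜)) - diagonal (fun l => (a l : 𝕜)) * U).rank ≤ r)
    (hij : (i : ℕ) + r ≤ j) : a j ≤ b i := by
  set R := U * diagonal (fun l => (b l : 𝕜)) - diagonal (fun l => (a l : 𝕜)) * U
  have hcard : #(Finset.Iio i) + #(Finset.Ioi j) + R.rank < Fintype.card (Fin n) := by
    rw [Fin.card_Iio, Fin.card_Ioi, Fintype.card_fin]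
    omega
  obtain ⟨y, hy0, hy, hUy, hRy⟩ := exists_ne_zero_mulVec_eq_zero_of_card_add_rank_lt U R hcard
  have hpos : 0 < ∑ l, ‖y l‖ ^ 2 := by
    obtain ⟨l, hl⟩ := Function.ne_iff.mp hy0
    exact Finset.sum_pos' (fun _ _ => sq_nonneg _)
      ⟨l, Finset.mem_univ l, pow_pos (norm_pos_iff.mpr hl) 2⟩
  have ha_le : ∀ l, ‖(U *ᵥ y) l‖ ^ 2 ≠ 0 → a j ≤ a l := fun l hl =>
    ha <| not_lt.mp fun hjl => hl <| by simp [hUy l (Finset.mem_Ioi.mpr hjl)]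
  have hle_b : ∀ l, ‖y l‖ ^ 2 ≠ 0 → b l ≤ b i := fun l hl =>
    hb <| not_lt.mp fun hli => hl <| by simp [hy l (Finset.mem_Iio.mpr hli)]
  refine le_of_mul_le_mul_right ?_ hpos
  calc a j * ∑ l, ‖y l‖ ^ 2
      = a j * ∑ l, ‖(U *ᵥ y) l‖ ^ 2 := by rw [sum_norm_sq_mulVec_of_mem_unitaryGroup hU]
    _ ≤ ∑ l, a l * ‖(U *ᵥ y) l‖ ^ 2 :=
        mul_sum_le_sum_mul_of_le_of_ne_zero (fun _ => sq_nonneg _) ha_le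
    _ = ∑ l, b l * ‖y l‖ ^ 2 := sum_mul_norm_sq_mulVec_of_mulVec_eq_zero hU hRy
    _ ≤ b i * ∑ l, ‖y l‖ ^ 2 :=
        sum_mul_le_mul_sum_of_le_of_ne_zero (fun _ => sq_nonneg _) hle_b

theorem interlacing_of_diagonal_add_eq_inv_mul_diagonal_mul (ha : Antitone a) (hb : Antitone b)
    (hU : U ∈ unitaryGroup (Fin n) 𝕜) {R : Matrix (Fin n) (Fin n) 𝕜} (hR : R.rank ≤ r)
    (h : diagonal (fun l => (b l : 𝕜)) + R = U⁻¹ * diagonal (fun l => (a l : 𝕜)) * U)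
    (hij : (i : ℕ) + r ≤ j) : a j ≤ b i ∧ b j ≤ a i := by
  have hUinv : U * U⁻¹ = 1 := by
    rw [inv_eq_left_inv (mem_unitaryGroup_iff'.mp hU), mem_unitaryGroup_iff.mp hU]
  have hmul : U * diagonal (fun l => (b l : 𝕜)) - diagonal (fun l => (a l : 𝕜)) * U =
      -(U * R) := by
    rw [sub_eq_iff_eq_add', ← sub_eq_add_neg, eq_sub_iff_add_eq, ← Matrix.mul_add, h,
      ← Matrix.mul_assoc, ← Matrix.mul_assoc, hUinv, Matrix.one_mul]
  have hrank : (U * diagonal (fun l => (b l : 𝕜)) -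
      diagonal (fun l => (a l : 𝕜)) * U).rank ≤ r := by
    rw [hmul, rank_neg]
    exact (rank_mul_le_right U R).trans hR
  exact ⟨le_of_rank_mul_diagonal_sub_diagonal_mul_le ha hb hU hrank hij,
    le_of_rank_mul_diagonal_sub_diagonal_mul_le hb ha (Unitary.star_mem hU)
      ((rank_star_mul_diagonal_sub_diagonal_mul_star a b U).trans_le hrank) hij⟩

end Interlacing

theorem stmt10_general {𝕜 : Type*} [RCLike 𝕜] {n r : ℕ} {x : ℝ} {p : Fin n → ℝ}
    (hp : Antitone p) {T : Matrix (Fin n) (Fin n) 𝕜} (hT : T ∈ unitaryGroup (Fin n) 𝕜)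
    {R : Matrix (Fin n) (Fin n) 𝕜} (hR : R.rank ≤ r)
    (heq : diagonal (fun j => ((Real.exp (2 * p j - x) : ℝ) : 𝕜)) + R =
      T⁻¹ * diagonal (fun j => ((Real.exp (2 * p j) : ℝ) : 𝕜)) * T)
    {i j : Fin n} (hij : (i : ℕ) + r ≤ j) : |x| / 2 ≤ p i - p j := by
  have hexp (c : ℝ) : Antitone fun l => Real.exp (2 * p l - c) := fun _ _ hkl =>
    Real.exp_le_exp.mpr (by linarith [hp hkl])
  obtain ⟨hle, hge⟩ := interlacing_of_diagonal_add_eq_inv_mul_diagonal_mul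
    (by simpa using hexp 0) (hexp x) hT hR heq hij
  rw [Real.exp_le_exp] at hle hge
  have habs : |x| ≤ 2 * (p i - p j) := abs_le.mpr ⟨by linarith, by linarith⟩
  linarith

/-- Proposition 3.2 of the thesis: the momentum map constraint forces the `p̂`-variables
into the closed polyhedron `C̄ₓ`; in particular the `p̂_j` are pairwise distinct. -/
theorem stmt10 (x : ℝ) (hx : x ≠ 0) (n : ℕ) (hn : 2 ≤ n) (p : Fin n → ℝ)
    (hp0 : p ⟨0, by omega⟩ ≤ 0) (hmono : ∀ i j : Fin n, i ≤ j → p j ≤ p i)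
    (T : Matrix (Fin n) (Fin n) ℂ) (hT : T ∈ Matrix.unitaryGroup (Fin n) ℂ)
    (w : Fin n → ℂ)
    (heq : Matrix.diagonal (fun j => ((Real.exp (2 * p j - x) : ℝ) : ℂ)) +
        ((Real.sign x : ℝ) : ℂ) •
          (Matrix.diagonal (fun j => ((Real.exp (p j) : ℝ) : ℂ)) *
            Matrix.vecMulVec w (star w) *
            Matrix.diagonal (fun j => ((Real.exp (p j) : ℝ) : ℂ))) =
      T⁻¹ * Matrix.diagonal (fun j => ((Real.exp (2 * p j) : ℝ) : ℂ)) * T) :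
    (∀ (k : ℕ) (hk : k + 1 < n), |x| / 2 ≤ p ⟨k, by omega⟩ - p ⟨k + 1, hk⟩) ∧
      Function.Injective p := by
  have gap {i j : Fin n} (hij : i < j) : |x| / 2 ≤ p i - p j :=
    stmt10_general hmono hT (rank_smul_mul_vecMulVec_mul_le_one _ _ _ _ _) heq hij
  have hanti : StrictAnti p := fun i j hij => by linarith [gap hij, abs_pos.mpr hx]
  exact ⟨fun k hk => gap (Nat.lt_succ_self k), hanti.injective⟩
end

section
/- For every nonzero real number x and every integer n ≥ 1, let ν(x) be the n×n upper triangular real matrix with ν(x)_{jj} = 1, ν(x)_{jk} = (1 − e^{−x})·e^{(k−j)x/2} for j < k, and ν(x)_{jk} = 0 for j > k, and let v̂(x) ∈ ℝⁿ have components v̂(x)_j = √(sgn(x)(e^x − 1)) · e^{(n−1−j)x/2} for j = 1,…,n (note sgn(x)(e^x − 1) > 0). Then ν(x)·ν(x)ᵀ = e^{−x}·1_n + sgn(x)·v̂(x)·v̂(x)ᵀ. -/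
/-!
Put `t = e^{x/2}` and `a = e^{-x} = t⁻²`, so that `ν(x)` has entries `(1 - a) t^(k - j)` above the
diagonal. Let `w_m = (t^(m-1), …, t, 1, 0, …, 0)`, with `m` nonzero entries. Then `w_{m+1}` is
`t w_m` plus a standard basis vector `e`, and the corresponding column of `ν(x)` is
`e + (1 - a) t w_m`. Since `a t² = 1`, the rank-one matrix of this column is
`a e eᵀ + (1 - a) (w_{m+1} w_{m+1}ᵀ - w_m w_mᵀ)`, and summing over the columns telescopes to
`ν νᵀ = a 1 + (1 - a) w_n w_nᵀ`. Finally `v̂(x)` is a scalar multiple of `w_n`.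
-/

open Matrix

section RankOne

variable {R ι κ μ : Type*}

theorem mul_eq_sum_vecMulVec_col_row [NonUnitalNonAssocSemiring R] [Fintype κ]
    (A : Matrix ι κ R) (B : Matrix κ μ R) : A * B = ∑ k, vecMulVec (A.col k) (B.row k) := by
  ext i j
  simp only [mul_apply, Matrix.sum_apply, vecMulVec_apply, col_apply, row_apply]

theorem one_eq_sum_vecMulVec_single [NonAssocSemiring R] [Fintype ι] [DecidableEq ι] :
    (1 : Matrix ι ι R) = ∑ k, vecMulVec (Pi.single k 1) (Pi.single k 1) := by
  simp only [← single_eq_single_vecMulVec_single, sum_single_one]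

theorem smul_vecMulVec_smul_smul [CommMonoid R] (c d d' : R) (u : ι → R) (v : κ → R) :
    c • vecMulVec (d • u) (d' • v) = (c * (d * d')) • vecMulVec u v := by
  rw [smul_vecMulVec, vecMulVec_smul, smul_smul, smul_smul, mul_assoc]

theorem vecMulVec_add_smul_self_of_mul_sq_eq_one [CommRing R] {a t : R} (hat : a * t ^ 2 = 1)
    (e w : ι → R) :
    vecMulVec (e + ((1 - a) * t) • w) (e + ((1 - a) * t) • w) =
      a • vecMulVec e e + (1 - a) • (vecMulVec (t • w + e) (t • w + e) - vecMulVec w w) := by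
  ext i j
  simp only [vecMulVec_apply, Matrix.add_apply, Matrix.sub_apply, Matrix.smul_apply,
    Pi.add_apply, Pi.smul_apply, smul_eq_mul]
  linear_combination (a - 1) * w i * w j * hat

end RankOne

section PowUnitriangular

variable {R : Type*} [CommRing R] {n : ℕ}

/-- The vector `(t ^ (m - 1), …, t, 1, 0, …, 0)` of length `n`, for `m ≤ n`. It is the
vector `w_m` of the telescoping sum, and `v̂(x)` is a multiple of the case `m = n`. -/
def descPowVec (n : ℕ) (t : R) (m : ℕ) : Fin n → R :=
  fun i => if (i : ℕ) < m then t ^ (m - 1 - i) else 0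

/-- The upper unitriangular Toeplitz matrix with entries `(1 - a) * t ^ (j - i)` above the diagonal:
the momentum value `ν(x)`, with `a` and `t` in place of `e^{-x}` and `e^{x/2}`. -/
def powUnitriangular (n : ℕ) (a t : R) : Matrix (Fin n) (Fin n) R :=
  of fun i j => if i = j then 1 else if i < j then (1 - a) * t ^ ((j : ℕ) - i) else 0

theorem descPowVec_zero (t : R) : descPowVec n t 0 = 0 := by
  ext i
  simp [descPowVec]

theorem descPowVec_self_apply (t : R) (i : Fin n) : descPowVec n t n i = t ^ (n - 1 - i) :=
  if_pos i.isLt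

theorem mul_descPowVec_apply (t : R) (m : ℕ) (i : Fin n) :
    t * descPowVec n t m i = if (i : ℕ) < m then t ^ (m - i) else 0 := by
  unfold descPowVec
  split_ifs with him
  · rw [← pow_succ']
    congr 1
    lia
  · exact mul_zero t

theorem descPowVec_succ (t : R) (k : Fin n) :
    descPowVec n t (k + 1) = t • descPowVec n t k + Pi.single k 1 := by
  ext i
  rw [Pi.add_apply, Pi.smul_apply, smul_eq_mul, mul_descPowVec_apply, Pi.single_apply, descPowVec]
  rcases lt_trichotomy i k with hik | rfl | hki
  · simp [hik, hik.ne, Nat.lt_succ_of_lt hik]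
  · simp
  · simp [hki.not_gt, hki.ne', hki]

theorem col_powUnitriangular (a t : R) (k : Fin n) :
    (powUnitriangular n a t).col k = Pi.single k 1 + ((1 - a) * t) • descPowVec n t k := by
  ext i
  rw [Pi.add_apply, Pi.smul_apply, smul_eq_mul, mul_assoc, mul_descPowVec_apply, Pi.single_apply,
    col_apply, powUnitriangular, of_apply]
  rcases eq_or_ne i k with rfl | hik
  · simp
  · simp [hik]

theorem powUnitriangular_mul_transpose {a t : R} (hat : a * t ^ 2 = 1) :
    powUnitriangular n a t * (powUnitriangular n a t)ᵀ =
      a • 1 + (1 - a) • vecMulVec (descPowVec n t n) (descPowVec n t n) := by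
  let W (m : ℕ) : Matrix (Fin n) (Fin n) R := vecMulVec (descPowVec n t m) (descPowVec n t m)
  have telescope : ∑ k : Fin n, (W (k + 1) - W k) = W n := by
    rw [Fin.sum_univ_eq_sum_range (fun m => W (m + 1) - W m), Finset.sum_range_sub]
    simp only [W, descPowVec_zero, vecMulVec_zero, sub_zero]
  calc powUnitriangular n a t * (powUnitriangular n a t)ᵀ
      = ∑ k : Fin n, (a • vecMulVec (Pi.single k 1) (Pi.single k 1) +
          (1 - a) • (W (k + 1) - W k)) := by
        simp only [mul_eq_sum_vecMulVec_col_row, row_transpose, col_powUnitriangular,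
          vecMulVec_add_smul_self_of_mul_sq_eq_one hat, descPowVec_succ, W]
    _ = a • 1 + (1 - a) • W n := by
        rw [Finset.sum_add_distrib, ← Finset.smul_sum, ← Finset.smul_sum, telescope,
          ← one_eq_sum_vecMulVec_single]

end PowUnitriangular

theorem sign_exp_sub_one (x : ℝ) : Real.sign (Real.exp x - 1) = Real.sign x := by
  rcases lt_trichotomy x 0 with hx | rfl | hx
  · rw [Real.sign_of_neg hx, Real.sign_of_neg (sub_neg.2 (Real.exp_lt_one_iff.2 hx))]
  · rw [Real.exp_zero, sub_self]
  · rw [Real.sign_of_pos hx, Real.sign_of_pos (sub_pos.2 (Real.one_lt_exp_iff.2 hx))]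

theorem sign_mul_sign_mul_self (y : ℝ) : Real.sign y * (Real.sign y * y) = y := by
  rcases Real.sign_apply_eq y with hy | hy | hy
  · rw [hy]; ring
  · rw [Real.sign_eq_zero_iff.1 hy, mul_zero, mul_zero]
  · rw [hy, one_mul, one_mul]

theorem sign_smul_vecMulVec_sqrt_smul_self {ι : Type*} (y : ℝ) (u : ι → ℝ) :
    Real.sign y • vecMulVec (√(Real.sign y * y) • u) (√(Real.sign y * y) • u) =
      y • vecMulVec u u := by
  rw [smul_vecMulVec_smul_smul, Real.mul_self_sqrt (Real.sign_mul_nonneg y),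
    sign_mul_sign_mul_self]

theorem exp_sub_mul_half_eq_pow (x : ℝ) {i j : ℕ} (hij : i ≤ j) :
    Real.exp (((j : ℝ) - i) * x / 2) = Real.exp (x / 2) ^ (j - i) := by
  rw [← Real.exp_nat_mul, Nat.cast_sub hij, mul_div_assoc]

theorem exp_neg_mul_exp_half_sq (x : ℝ) : Real.exp (-x) * Real.exp (x / 2) ^ 2 = 1 := by
  rw [← Real.exp_nat_mul, ← Real.exp_add, Real.exp_eq_one_iff]
  push_cast
  ring

theorem exp_sub_one_mul_exp_neg_half_mul_self (x : ℝ) :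
    (Real.exp x - 1) * (Real.exp (-(x / 2)) * Real.exp (-(x / 2))) = 1 - Real.exp (-x) := by
  rw [← Real.exp_add, ← neg_add, add_halves, sub_mul, ← Real.exp_add, add_neg_cancel,
    Real.exp_zero, one_mul]

theorem exp_mul_half_eq_exp_neg_half_mul_descPowVec (x : ℝ) {n : ℕ} (i : Fin n) :
    Real.exp (((n : ℝ) - 1 - ((i : ℝ) + 1)) * x / 2) =
      Real.exp (-(x / 2)) * descPowVec n (Real.exp (x / 2)) n i := by
  have hi : (i : ℕ) ≤ n - 1 := Nat.le_sub_one_of_lt i.isLt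
  rw [descPowVec_self_apply, ← exp_sub_mul_half_eq_pow x hi, ← Real.exp_add,
    Nat.cast_pred i.pos]
  congr 1
  ring

/-- The identity (3.55) of the thesis: `ν(x) ν(x)ᵀ = e^{-x} 1 + sgn(x) v̂(x) v̂(x)ᵀ`. -/
theorem stmt12 (x : ℝ) (hx : x ≠ 0) (n : ℕ) (hn : 1 ≤ n) :
    let ν : Matrix (Fin n) (Fin n) ℝ :=
      Matrix.of fun i j =>
        if i = j then 1
        else if i < j then
          (1 - Real.exp (-x)) * Real.exp ((((j : ℕ) : ℝ) - ((i : ℕ) : ℝ)) * x / 2)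
        else 0
    let v : Fin n → ℝ := fun i =>
      Real.sqrt (Real.sign x * (Real.exp x - 1)) *
        Real.exp (((n : ℝ) - 1 - (((i : ℕ) : ℝ) + 1)) * x / 2)
    ν * ν.transpose =
      Real.exp (-x) • (1 : Matrix (Fin n) (Fin n) ℝ) +
        Real.sign x • Matrix.vecMulVec v v := by
  intro ν v
  let w := descPowVec n (Real.exp (x / 2)) n
  have hν : ν = powUnitriangular n (Real.exp (-x)) (Real.exp (x / 2)) := by
    ext i j
    simp only [ν, powUnitriangular, of_apply]
    split_ifs with _ hij
    · rfl
    · rw [exp_sub_mul_half_eq_pow x (Fin.le_def.1 hij.le)]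
    · rfl
  have hv : v = √(Real.sign x * (Real.exp x - 1)) • Real.exp (-(x / 2)) • w :=
    funext fun i => congrArg _ (exp_mul_half_eq_exp_neg_half_mul_descPowVec x i)
  have hvv : Real.sign x • vecMulVec v v = (1 - Real.exp (-x)) • vecMulVec w w := by
    rw [hv, ← sign_exp_sub_one x, sign_smul_vecMulVec_sqrt_smul_self, smul_vecMulVec_smul_smul,
      exp_sub_one_mul_exp_neg_half_mul_self]
  rw [hν, hvv, powUnitriangular_mul_transpose (exp_neg_mul_exp_half_sq x)]
end

section
/- Let v ∈ ℝ and let j ≥ 1 be an integer. There exist real numbers a₁,…,a_j, b₁,…,b_j, c₁,…,c_j, d₁,…,d_j, depending only on v and j, such that for every integer n ≥ 1 and every n×n complex matrix α, the j-th power of the 2n×2n block matrix 𝓛 = [[e^{−2v}·1_n, −e^{−v}·α],[e^{−v}·α*, e^{2v}·1_n − α*α]] has blocks (𝓛^j)₁₁ = Σ_{m=1}^{j} a_m·(αα*)^{j−m}, (𝓛^j)₁₂ = α·Σ_{m=1}^{j} b_m·(α*α)^{j−m}, (𝓛^j)₂₁ = α*·Σ_{m=1}^{j} c_m·(αα*)^{j−m},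 and (𝓛^j)₂₂ = (−1)^j·(α*α)^j + Σ_{m=1}^{j} d_m·(α*α)^{j−m}. -/
open Matrix

/-! The matrices with blocks `a(αβ)`, `α b(βα)`, `β c(αβ)` and `d(βα)`, for polynomials
`a, b, c, d`, are closed under multiplication because `β p(αβ) = p(βα) β`. For `β = α*` the matrix
`𝓛` has this form with `a, b, c` constant and `d` linear with leading coefficient `-1`. Hence its
powers have this form too, and each factor `𝓛` raises the degrees by at most one. -/

section Polynomial

open Polynomial

theorem mul_mem_degreeLT_add {R : Type*} [Semiring R] {p q : R[X]} {j k : ℕ}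
    (hp : p ∈ degreeLT R j) (hq : q.degree ≤ k) :
    p * q ∈ degreeLT R (j + k) := by
  rw [mem_degreeLT] at hp ⊢
  calc (p * q).degree ≤ p.degree + q.degree := degree_mul_le p q
    _ ≤ p.degree + k := by gcongr
    _ < j + k := WithBot.add_lt_add_right (WithBot.natCast_ne_bot k) hp
    _ = (j + k : ℕ) := by norm_cast

theorem neg_X_pow_mem_degreeLT_succ {R : Type*} [Ring R] (j : ℕ) :
    (-X : R[X]) ^ j ∈ degreeLT R (j + 1) := by
  rw [degreeLT_succ_eq_degreeLE, mem_degreeLE, neg_pow]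
  compute_degree!

section Semiring

variable {R : Type*} [CommSemiring R]

theorem aeval_eq_sum_range_reflect {A : Type*} [Semiring A] [Algebra R A] {p : R[X]} {j : ℕ}
    (hp : p ∈ degreeLT R j) (M : A) :
    aeval M p = ∑ k ∈ Finset.range j, p.coeff (j - 1 - k) • M ^ (j - 1 - k) := by
  rw [Finset.sum_range_reflect fun k => p.coeff k • M ^ k, aeval_def, eval₂_eq_sum]
  simp only [← Algebra.smul_def]
  exact sum_eq_of_subset _ (fun k => zero_smul R (M ^ k)) fun k hk =>
    Finset.mem_range.2 (Nat.cast_lt.1 ((le_degree_of_mem_supp k hk).trans_lt (mem_degreeLT.1 hp)))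

variable {S : Type*} [Semiring S] [Algebra R S] {m n : Type*} [Fintype m] [DecidableEq m]
  [Fintype n] [DecidableEq n]

theorem mul_aeval_eq_aeval_mul {P : Matrix m m S} {Q : Matrix n n S} {M : Matrix m n S}
    (h : M * Q = P * M) (p : R[X]) : M * aeval Q p = aeval P p * M := by
  have hpow (k : ℕ) : M * Q ^ k = P ^ k * M := by
    induction k with
    | zero => rw [pow_zero, pow_zero, Matrix.mul_one, Matrix.one_mul]
    | succ k ih =>
      rw [pow_succ, pow_succ, ← Matrix.mul_assoc, ih, Matrix.mul_assoc, h, Matrix.mul_assoc]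
  simp only [aeval_eq_sum_range, Matrix.mul_sum, Matrix.sum_mul, Matrix.mul_smul, Matrix.smul_mul,
    hpow]

/-- The matrix with blocks `a(αβ)`, `α b(βα)`, `β c(αβ)` and `d(βα)`: the common shape of the
powers of `𝓛`, where `β = α*`. -/
noncomputable def aevalBlocks (α : Matrix m n S) (β : Matrix n m S) (a b c d : R[X]) :
    Matrix (m ⊕ n) (m ⊕ n) S :=
  fromBlocks (aeval (α * β) a) (α * aeval (β * α) b) (β * aeval (α * β) c) (aeval (β * α) d)

theorem aevalBlocks_mul (α : Matrix m n S) (β : Matrix n m S) (a b c d a' b' c' d' : R[X]) :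
    aevalBlocks α β a b c d * aevalBlocks α β a' b' c' d' =
      aevalBlocks α β (a * a' + X * (b * c')) (a * b' + b * d') (c * a' + d * c')
        (X * (c * b') + d * d') := by
  have hα (p : R[X]) : aeval (α * β) p * α = α * aeval (β * α) p :=
    (mul_aeval_eq_aeval_mul (Matrix.mul_assoc α β α).symm p).symm
  have hβ (p : R[X]) : aeval (β * α) p * β = β * aeval (α * β) p :=
    (mul_aeval_eq_aeval_mul (Matrix.mul_assoc β α β).symm p).symm
  have h₁₁ : α * aeval (β * α) b * (β * aeval (α * β) c') = aeval (α * β) (X * (b * c')) := by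
    rw [Matrix.mul_assoc, ← Matrix.mul_assoc _ β, hβ, Matrix.mul_assoc β, ← Matrix.mul_assoc α,
      map_mul, map_mul, aeval_X]
  have h₁₂ : aeval (α * β) a * (α * aeval (β * α) b') = α * aeval (β * α) (a * b') := by
    rw [← Matrix.mul_assoc, hα, Matrix.mul_assoc, map_mul]
  have h₂₁ : aeval (β * α) d * (β * aeval (α * β) c') = β * aeval (α * β) (d * c') := by
    rw [← Matrix.mul_assoc, hβ, Matrix.mul_assoc, map_mul]
  have h₂₂ : β * aeval (α * β) c * (α * aeval (β * α) b') = aeval (β * α) (X * (c * b')) := by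
    rw [Matrix.mul_assoc, ← Matrix.mul_assoc _ α, hα, Matrix.mul_assoc α, ← Matrix.mul_assoc β,
      map_mul, map_mul, aeval_X]
  simp only [aevalBlocks, fromBlocks_multiply, h₁₁, h₁₂, h₂₁, h₂₂, map_add, map_mul,
    Matrix.mul_assoc, Matrix.mul_add]

end Semiring

theorem aevalBlocks_C_C_C_C_sub_X {R S m n : Type*} [CommRing R] [Ring S] [Algebra R S] [Fintype m]
    [DecidableEq m] [Fintype n] [DecidableEq n] (x y w z : R) (α : Matrix m n S)
    (β : Matrix n m S) :
    aevalBlocks α β (C x) (C y) (C w) (C z - X) =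
      fromBlocks (x • 1) (y • α) (w • β) (z • 1 - β * α) := by
  simp [aevalBlocks, Algebra.algebraMap_eq_smul_one]

theorem exists_fromBlocks_pow_eq_aevalBlocks {R : Type*} [CommRing R] (x y w z : R) {j : ℕ}
    (hj : 1 ≤ j) :
    ∃ a ∈ degreeLT R j, ∃ b ∈ degreeLT R j, ∃ c ∈ degreeLT R j, ∃ d ∈ degreeLT R j,
      ∀ (S : Type*) [Ring S] [Algebra R S] (m n : Type*) [Fintype m] [DecidableEq m]
        [Fintype n] [DecidableEq n] (α : Matrix m n S) (β : Matrix n m S),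
        fromBlocks (x • 1) (y • α) (w • β) (z • 1 - β * α) ^ j =
          aevalBlocks α β a b c ((-X) ^ j + d) := by
  simp only [← aevalBlocks_C_C_C_C_sub_X]
  induction j, hj using Nat.le_induction with
  | base =>
    have hC (r : R) : C r ∈ degreeLT R 1 :=
      mem_degreeLT.2 (degree_C_le.trans_lt (Nat.cast_lt.2 zero_lt_one))
    refine ⟨_, hC x, _, hC y, _, hC w, _, hC z, fun _ _ _ _ _ _ _ _ _ α β => ?_⟩
    rw [pow_one, pow_one, neg_add_eq_sub]
  | succ j _ ih =>
    obtain ⟨a, ha, b, hb, c, hc, d, hd, h⟩ := ih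
    have hmul {p q : R[X]} (hp : p ∈ degreeLT R j) (hq : q.degree ≤ 1) :
        p * q ∈ degreeLT R (j + 1) := mul_mem_degreeLT_add hp hq
    have hX (r : R) : r • (-X) ^ j ∈ degreeLT R (j + 1) :=
      Submodule.smul_mem _ r (neg_X_pow_mem_degreeLT_succ j)
    have hC (r : R) : (C r).degree ≤ 1 := degree_C_le.trans zero_le_one
    have hCX (r : R) : (C r * X).degree ≤ 1 := degree_C_mul_X_le r
    have hz : (C z - X).degree ≤ 1 := by compute_degree
    refine ⟨a * C x + b * (C w * X), add_mem (hmul ha (hC x)) (hmul hb (hCX w)),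
      a * C y + b * (C z - X), add_mem (hmul ha (hC y)) (hmul hb hz),
      c * C x + (d * C w + w • (-X) ^ j),
      add_mem (hmul hc (hC x)) (add_mem (hmul hd (hC w)) (hX w)),
      c * (C y * X) + (d * (C z - X) + z • (-X) ^ j),
      add_mem (hmul hc (hCX y)) (add_mem (hmul hd hz) (hX z)), fun S _ _ m n _ _ _ _ α β => ?_⟩
    rw [pow_succ, h, aevalBlocks_mul]
    simp only [smul_eq_C_mul]
    congr 1 <;> ring

theorem stmt13_general {R : Type*} [CommRing R] (x y w z : R) (j : ℕ) (hj : 1 ≤ j) :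
    ∃ a b c d : ℕ → R, ∀ (S : Type*) [Ring S] [Algebra R S] (m n : Type*) [Fintype m]
      [DecidableEq m] [Fintype n] [DecidableEq n] (α : Matrix m n S) (β : Matrix n m S),
      let L : Matrix (m ⊕ n) (m ⊕ n) S :=
        fromBlocks (x • 1) (y • α) (w • β) (z • 1 - β * α)
      toBlocks₁₁ (L ^ j) = ∑ k ∈ Finset.range j, a k • (α * β) ^ (j - 1 - k) ∧
        toBlocks₁₂ (L ^ j) = α * ∑ k ∈ Finset.range j, b k • (β * α) ^ (j - 1 - k) ∧
        toBlocks₂₁ (L ^ j) = β * ∑ k ∈ Finset.range j, c k • (α * β) ^ (j - 1 - k) ∧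
        toBlocks₂₂ (L ^ j) =
          (-(β * α)) ^ j + ∑ k ∈ Finset.range j, d k • (β * α) ^ (j - 1 - k) := by
  obtain ⟨a, ha, b, hb, c, hc, d, hd, h⟩ := exists_fromBlocks_pow_eq_aevalBlocks x y w z hj
  refine ⟨fun k => a.coeff (j - 1 - k), fun k => b.coeff (j - 1 - k),
    fun k => c.coeff (j - 1 - k), fun k => d.coeff (j - 1 - k), ?_⟩
  intro S _ _ m n _ _ _ _ α β L
  have hL : L ^ j = aevalBlocks α β a b c ((-X) ^ j + d) := h S m n α β
  simp only [hL, aevalBlocks, toBlocks_fromBlocks₁₁, toBlocks_fromBlocks₁₂, toBlocks_fromBlocks₂₁,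
    toBlocks_fromBlocks₂₂, map_add, map_pow, map_neg, aeval_X, aeval_eq_sum_range_reflect ha,
    aeval_eq_sum_range_reflect hb, aeval_eq_sum_range_reflect hc, aeval_eq_sum_range_reflect hd,
    and_self]

end Polynomial

/-- Lemma C.7 of the thesis: the blocks of the `j`-th power of the reduced Lax-type
matrix `𝓛` are polynomials in `αα*` resp. `α*α` with coefficients depending only on the
parameter `v` and on `j`. -/
theorem stmt13 (v : ℝ) (j : ℕ) (hj : 1 ≤ j) :
    ∃ a b c d : ℕ → ℝ, ∀ (n : ℕ), 1 ≤ n → ∀ α : Matrix (Fin n) (Fin n) ℂ,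
      let L : Matrix (Fin n ⊕ Fin n) (Fin n ⊕ Fin n) ℂ :=
        Matrix.fromBlocks ((Real.exp (-(2 * v)) : ℂ) • (1 : Matrix (Fin n) (Fin n) ℂ))
          (-((Real.exp (-v) : ℂ) • α))
          ((Real.exp (-v) : ℂ) • αᴴ)
          ((Real.exp (2 * v) : ℂ) • (1 : Matrix (Fin n) (Fin n) ℂ) - αᴴ * α)
      Matrix.toBlocks₁₁ (L ^ j) =
          ∑ m ∈ Finset.range j, ((a m : ℝ) : ℂ) • (α * αᴴ) ^ (j - 1 - m) ∧
        Matrix.toBlocks₁₂ (L ^ j) =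
          α * ∑ m ∈ Finset.range j, ((b m : ℝ) : ℂ) • (αᴴ * α) ^ (j - 1 - m) ∧
        Matrix.toBlocks₂₁ (L ^ j) =
          αᴴ * ∑ m ∈ Finset.range j, ((c m : ℝ) : ℂ) • (α * αᴴ) ^ (j - 1 - m) ∧
        Matrix.toBlocks₂₂ (L ^ j) =
          (-1 : ℂ) ^ j • (αᴴ * α) ^ j +
            ∑ m ∈ Finset.range j, ((d m : ℝ) : ℂ) • (αᴴ * α) ^ (j - 1 - m) := by
  obtain ⟨a, b, c, d, h⟩ :=
    stmt13_general (Real.exp (-(2 * v))) (-Real.exp (-v)) (Real.exp (-v)) (Real.exp (2 * v)) j hj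
  exact ⟨a, b, c, d, fun n _ α => by
    simpa only [neg_smul, Complex.coe_smul, ← smul_pow, one_smul] using
      h ℂ (Fin n) (Fin n) α αᴴ⟩
end

section
/- Let n ≥ 2 be an integer and let p, q ∈ {1,…,n−1} satisfy gcd(n,p) = 1 and p·q ≡ 1 (mod n). Define (n−1)×(n−1) integer matrices A, B, C as follows: A_{j,k} = 1 if 1 ≤ j ≤ n−p and j ≤ k ≤ j+p−1; A_{j,k} = −1 if n−p < j ≤ n−1 and j+p−n ≤ k ≤ j−1; and A_{j,k} = 0 otherwise; B_{m,k} = 0 if k − m ≡ ℓp (mod n) for some ℓ ∈ {1,…,n−q}, and B_{m,k} = 1 otherwise; C_{m,k} = 0 if k ≡ ℓp (mod n) for some ℓ ∈ {1,…,n−q}, and C_{m,k} = 1 otherwise. Then A · (B − C)ᵀ = 1_{n−1} and det(A) = 1; in particular A is invertible over ℤ and (A⁻¹)ᵀ = B − C. -/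
open Matrix Classical

/-!
Index rows and columns by the nonzero residues modulo `n` and let `X` be the matrix by which
`x ↦ x + 1` acts on `ℤ^(ZMod n)` modulo the constants, so that `1 + X + ⋯ + X ^ (n - 1) = 0`. Then
`Aᵀ = 1 + X + ⋯ + X ^ (p - 1)` and `B - C = 1 + X ^ p + ⋯ + (X ^ p) ^ (q - 1)`, and their product is
`1 + X + ⋯ + X ^ (p * q - 1)`, which collapses to `1` since `p * q ≡ 1` modulo `n`. For the
determinant, `(1 + X + ⋯ + X ^ (p - 1)) * (X - 1) = X ^ p - 1`, and `X ^ p` is conjugate to `X`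
through multiplication by `p` on `ZMod n`, while `X - 1` is nonsingular.
-/

open Finset

section GeomSum

lemma geom_sum_pow_mul_geom_sum {S : Type*} [Semiring S] (x : S) (p q : ℕ) :
    (∑ j ∈ range q, (x ^ p) ^ j) * ∑ a ∈ range p, x ^ a = ∑ k ∈ range (p * q), x ^ k := by
  induction q with
  | zero => simp
  | succ q ih =>
    rw [sum_range_succ, add_mul, ih, Nat.mul_succ, sum_range_add, mul_sum]
    simp only [pow_add, pow_mul]

variable {S : Type*} [Ring S] {x : S} {n : ℕ}

lemma pow_eq_one_of_geom_sum_eq_zero (hx : ∑ k ∈ range n, x ^ k = 0) : x ^ n = 1 := by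
  rw [← sub_eq_zero, ← geom_sum_mul, hx, zero_mul]

lemma geom_sum_eq_one_of_mod_eq_one (hx : ∑ k ∈ range n, x ^ k = 0) {N : ℕ} (hN : N % n = 1) :
    ∑ k ∈ range N, x ^ k = 1 := by
  rw [← Nat.div_add_mod N n, hN, sum_range_succ, ← geom_sum_pow_mul_geom_sum, hx, mul_zero,
    zero_add, pow_mul, pow_eq_one_of_geom_sum_eq_zero hx, one_pow]

lemma sub_one_mul_sum_natCast_mul_pow (x : S) (n : ℕ) :
    (x - 1) * ∑ k ∈ range n, (k : S) * x ^ k = n * x ^ n - x * ∑ k ∈ range n, x ^ k := by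
  induction n with
  | zero => simp
  | succ n ih =>
    have hcomm : x * ((n : S) * x ^ n) = n * x ^ (n + 1) := by
      rw [← mul_assoc, ← Nat.cast_comm, mul_assoc, ← pow_succ']
    rw [sum_range_succ, mul_add, ih, sum_range_succ, mul_add, sub_mul, hcomm, one_mul,
      ← pow_succ', Nat.cast_succ, add_mul, one_mul]
    abel

end GeomSum

section Determinant

variable {ι R : Type*} [Fintype ι] [DecidableEq ι] [CommRing R] {M N : Matrix ι ι R}

lemma det_sub_one_eq_of_isConj (h : IsConj M N) : (M - 1).det = (N - 1).det := by
  obtain ⟨c, hc⟩ := h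
  have hsub : (c : Matrix ι ι R) * (M - 1) = (N - 1) * c := by
    rw [mul_sub, sub_mul, hc.eq, mul_one, one_mul]
  have hdet := congrArg Matrix.det hsub
  rw [Matrix.det_mul, Matrix.det_mul, mul_comm] at hdet
  exact ((Matrix.isUnit_iff_isUnit_det _).1 c.isUnit).mul_right_cancel hdet

variable [IsDomain R] {n : ℕ}

lemma det_sub_one_ne_zero_of_geom_sum_eq_zero (hn : (n : R) ≠ 0)
    (hM : ∑ k ∈ range n, M ^ k = 0) : (M - 1).det ≠ 0 := by
  have hmul : (M - 1) * ∑ k ∈ range n, (k : Matrix ι ι R) * M ^ k = (n : R) • 1 := by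
    rw [sub_one_mul_sum_natCast_mul_pow, hM, pow_eq_one_of_geom_sum_eq_zero hM, mul_zero,
      sub_zero, mul_one, Nat.cast_smul_eq_nsmul, nsmul_one]
  intro hzero
  have hdet := congrArg Matrix.det hmul
  rw [Matrix.det_mul, hzero, zero_mul, Matrix.det_smul, Matrix.det_one, mul_one] at hdet
  exact pow_ne_zero _ hn hdet.symm

lemma det_geom_sum_eq_one_of_isConj_pow (hn : (n : R) ≠ 0) (hM : ∑ k ∈ range n, M ^ k = 0) {p : ℕ}
    (hconj : IsConj M (M ^ p)) : (∑ a ∈ range p, M ^ a).det = 1 := by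
  refine mul_right_cancel₀ (det_sub_one_ne_zero_of_geom_sum_eq_zero hn hM) ?_
  rw [← Matrix.det_mul, geom_sum_mul, one_mul, det_sub_one_eq_of_isConj hconj]

end Determinant

section Residues

variable {n : ℕ}

lemma val_natCast_sub_natCast {a b : ℕ} (ha : a < n) (hb : b < n) :
    ((a : ZMod n) - b).val = if b ≤ a then a - b else n + a - b := by
  split_ifs with h
  · rw [← Nat.cast_sub h, ZMod.val_natCast_of_lt (by omega)]
  · have hcast : (a : ZMod n) - b = (n + a - b : ℕ) := by
      rw [Nat.cast_sub (by omega), Nat.cast_add, ZMod.natCast_self, zero_add]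
    rw [hcast, ZMod.val_natCast_of_lt (by omega)]

variable [NeZero n]

/-- The bijection `i ↦ i + 1` from `Fin (n - 1)` to the nonzero residues modulo `n`; the shift
accounts for matrix indices starting at `1` in the source and at `0` in `Fin (n - 1)`. -/
def finEquivNonzero (n : ℕ) [NeZero n] : Fin (n - 1) ≃ {x : ZMod n // x ≠ 0} where
  toFun i := ⟨((i + 1 : ℕ) : ZMod n), fun h => by
    have := congrArg ZMod.val h
    rw [ZMod.val_natCast_of_lt (by omega), ZMod.val_zero] at this
    omega⟩
  invFun x := ⟨(x : ZMod n).val - 1, by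
    have := ZMod.val_lt (x : ZMod n)
    have := ZMod.val_pos.2 x.2
    omega⟩
  left_inv i := by
    ext
    simp only [ZMod.val_natCast_of_lt (show (i : ℕ) + 1 < n by omega), Nat.add_sub_cancel]
  right_inv x := by
    ext
    simp only [Nat.sub_add_cancel (ZMod.val_pos.2 x.2), ZMod.natCast_zmod_val]

lemma coe_finEquivNonzero (i : Fin (n - 1)) :
    (finEquivNonzero n i : ZMod n) = ((i + 1 : ℕ) : ZMod n) :=
  rfl

lemma sum_range_ite_mul_add_eq {R : Type*} [AddCommMonoidWithOne R] {u v : ZMod n}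
    (huv : u * v = 1) {q : ℕ} (hq : q ≤ n) (x y : ZMod n) :
    ∑ j ∈ range q, (if j * u + x = y then (1 : R) else 0) =
      if ((y - x) * v).val < q then 1 else 0 := by
  have hsolve (j : ℕ) (hj : j ∈ range q) : j * u + x = y ↔ ((y - x) * v).val = j := by
    have hjn : j < n := (mem_range.1 hj).trans_le hq
    rw [← eq_sub_iff_add_eq, ← ZMod.val_natCast_of_lt hjn, (ZMod.val_injective n).eq_iff,
      ZMod.val_natCast_of_lt hjn]
    constructor <;> intro h
    · rw [← h, mul_assoc, huv, mul_one]
    · rw [← h, mul_assoc, mul_comm v, huv, mul_one]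
  rw [sum_congr rfl fun j hj => if_congr (hsolve j hj) rfl rfl, sum_ite_eq]
  simp only [mem_range]

lemma exists_mem_Icc_emod_eq_mul_emod_iff {p q : ℕ} (hpq : (p : ZMod n) * q = 1) (z : ℤ) :
    (∃ l ∈ Icc 1 (n - q), z % n = ((l : ℤ) * p) % n) ↔ ¬ (-(z : ZMod n) * q).val < q := by
  have hsolve (l : ℕ) : z % n = ((l : ℤ) * p) % n ↔ (l : ZMod n) = z * q := by
    rw [← ZMod.intCast_eq_intCast_iff', Int.cast_mul, Int.cast_natCast, Int.cast_natCast]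
    constructor <;> intro h
    · rw [h, mul_assoc, hpq, mul_one]
    · rw [h, mul_assoc, mul_comm (q : ZMod n), hpq, mul_one]
  simp only [hsolve, mem_Icc, not_lt, neg_mul]
  constructor
  · rintro ⟨l, ⟨hl, hl'⟩, h⟩
    have hcast : -((z : ZMod n) * q) = (n - l : ℕ) := by
      rw [← h, Nat.cast_sub (by omega), ZMod.natCast_self, zero_sub]
    rw [hcast, ZMod.val_natCast_of_lt (by omega)]
    omega
  · intro h
    have hlt := ZMod.val_lt (-((z : ZMod n) * (q : ZMod n)))
    refine ⟨n - (-((z : ZMod n) * (q : ZMod n))).val, by omega, ?_⟩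
    rw [Nat.cast_sub hlt.le, ZMod.natCast_self, ZMod.natCast_zmod_val, zero_sub, neg_neg]

end Residues

section StandardRep

variable (R : Type*) [Ring R]

/-- The action of the permutations of `ι` on `R^ι` modulo the constant vectors, in the basis given
by the classes of the standard vectors `e i`, `i ≠ o`; the class of `e o` is `-∑ i, e i`. -/
def standardRep {ι : Type*} [Fintype ι] [DecidableEq ι] (o : ι) :
    Equiv.Perm ι →* Matrix {i // i ≠ o} {i // i ≠ o} R where
  toFun σ := Matrix.of fun k i => (if σ i = k then 1 else 0) - if σ i = o then 1 else 0
  map_one' := by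
    ext k i
    rw [Matrix.of_apply, Equiv.Perm.one_apply, if_neg i.2, sub_zero, Matrix.one_apply]
    exact if_congr (by rw [Subtype.ext_iff, eq_comm]) rfl rfl
  map_mul' σ τ := by
    ext k i
    have hsum (y : ι) : ∑ j, (if σ j = y then (1 : R) else 0) = 1 := by
      simp [← Equiv.eq_symm_apply]
    have hfull : ∑ j, ((if σ j = k then (1 : R) else 0) - if σ j = o then 1 else 0) *
        ((if τ i = j then 1 else 0) - if τ i = o then 1 else 0) =
        (if σ (τ i) = k then 1 else 0) - if σ (τ i) = o then 1 else 0 := by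
      rw [sum_congr rfl fun j _ => mul_sub _ _ _, sum_sub_distrib, ← sum_mul, sum_sub_distrib,
        hsum, hsum, sub_self, zero_mul, sub_zero]
      simp only [mul_ite, mul_one, mul_zero, sum_ite_eq, mem_univ, if_true]
    rw [Fintype.sum_eq_add_sum_subtype_ne _ o, sub_self, mul_zero, zero_add] at hfull
    exact hfull.symm

variable {n : ℕ} [NeZero n]

/-- The matrix by which the translation `x ↦ c + x` of `ZMod n` acts in `standardRep`, relative to
the nonzero residues. -/
def translationMatrix (c : ZMod n) : Matrix {x : ZMod n // x ≠ 0} {x : ZMod n // x ≠ 0} R :=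
  standardRep R 0 (Equiv.addLeft c)

lemma translationMatrix_pow (c : ZMod n) (j : ℕ) :
    translationMatrix R c ^ j = translationMatrix R ((j : ZMod n) * c) := by
  rw [translationMatrix, translationMatrix, ← map_pow, Equiv.nsmul_addLeft, nsmul_eq_mul]

lemma isConj_translationMatrix_one (u : (ZMod n)ˣ) :
    IsConj (translationMatrix R 1) (translationMatrix R (u : ZMod n)) := by
  have hperm : IsConj (Equiv.addLeft (1 : ZMod n)) (Equiv.addLeft (u : ZMod n)) :=
    isConj_iff.2 ⟨u.mulLeft, by ext x; simp [mul_add]⟩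
  exact (standardRep R (0 : ZMod n)).map_isConj hperm

lemma geom_sum_translationMatrix_apply {u v : ZMod n} (huv : u * v = 1) {q : ℕ} (hq : q ≤ n)
    (k i : {x : ZMod n // x ≠ 0}) :
    (∑ j ∈ range q, translationMatrix R u ^ j) k i =
      (if ((k - i) * v : ZMod n).val < q then 1 else 0) -
        if (-i * v : ZMod n).val < q then 1 else 0 := by
  rw [← sum_range_ite_mul_add_eq huv hq, ← zero_sub, ← sum_range_ite_mul_add_eq huv hq,
    ← sum_sub_distrib, Matrix.sum_apply]
  simp only [translationMatrix_pow]
  rfl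

lemma geom_sum_translationMatrix_one_eq_zero :
    ∑ j ∈ range n, translationMatrix R (1 : ZMod n) ^ j = 0 := by
  ext k i
  rw [geom_sum_translationMatrix_apply R (mul_one 1) le_rfl, if_pos (ZMod.val_lt _),
    if_pos (ZMod.val_lt _), sub_self, Matrix.zero_apply]

end StandardRep

section CoefficientMatrices

variable {n : ℕ} [NeZero n]

lemma transpose_geom_sum_translationMatrix_apply {p : ℕ} (hp : p ≤ n) (i k : Fin (n - 1)) :
    (∑ a ∈ range p, translationMatrix ℤ (1 : ZMod n) ^ a)ᵀ (finEquivNonzero n i)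
      (finEquivNonzero n k) =
      if (i : ℕ) + 1 ≤ n - p ∧ (i : ℕ) + 1 ≤ (k : ℕ) + 1 ∧ (k : ℕ) + 1 < (i : ℕ) + 1 + p then 1
      else if n - p < (i : ℕ) + 1 ∧ (i : ℕ) + 1 + p ≤ n + ((k : ℕ) + 1) ∧
        (k : ℕ) + 1 < (i : ℕ) + 1 then -1
      else 0 := by
  have hneg : (-((i + 1 : ℕ) : ZMod n)).val = n - (i + 1) := by
    rw [← coe_finEquivNonzero, ZMod.neg_val, if_neg (finEquivNonzero n i).2, coe_finEquivNonzero,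
      ZMod.val_natCast_of_lt (by omega)]
  rw [Matrix.transpose_apply, geom_sum_translationMatrix_apply ℤ (mul_one 1) hp, mul_one, mul_one,
    coe_finEquivNonzero, coe_finEquivNonzero, hneg,
    val_natCast_sub_natCast (by omega) (by omega)]
  split_ifs <;> omega

lemma geom_sum_translationMatrix_natCast_apply {p q : ℕ} (hpq : (p : ZMod n) * q = 1)
    (hqn : q ≤ n) (m k : Fin (n - 1)) :
    (∑ j ∈ range q, translationMatrix ℤ (p : ZMod n) ^ j) (finEquivNonzero n m)
      (finEquivNonzero n k) =
      (if ∃ l ∈ Icc 1 (n - q), (((k : ℕ) : ℤ) - ((m : ℕ) : ℤ)) % n = ((l : ℤ) * p) % n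
        then 0 else 1) -
      if ∃ l ∈ Icc 1 (n - q), (((k : ℕ) : ℤ) + 1) % n = ((l : ℤ) * p) % n then 0 else 1 := by
  rw [geom_sum_translationMatrix_apply ℤ hpq hqn, coe_finEquivNonzero, coe_finEquivNonzero]
  simp only [exists_mem_Icc_emod_eq_mul_emod_iff hpq, ite_not]
  push_cast
  rw [neg_sub, add_sub_add_right_eq_sub]

end CoefficientMatrices

/-- Proposition 5.1 of the thesis: the explicit inverse-transpose `Ω = B − C` of the
coefficient matrix `A` appearing in the type (i) compactification of the trigonometric
Ruijsenaars-Schneider system, together with `det A = 1`. -/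
theorem stmt19 (n p q : ℕ) (hn : 2 ≤ n)
    (hp1 : 1 ≤ p) (hp2 : p ≤ n - 1) (hq1 : 1 ≤ q) (hq2 : q ≤ n - 1)
    (hgcd : Nat.gcd n p = 1) (hpq : p * q ≡ 1 [MOD n]) :
    let A : Matrix (Fin (n - 1)) (Fin (n - 1)) ℤ :=
      Matrix.of fun i k =>
        if (i : ℕ) + 1 ≤ n - p ∧ (i : ℕ) + 1 ≤ (k : ℕ) + 1 ∧ (k : ℕ) + 1 < (i : ℕ) + 1 + p
          then 1
        else if n - p < (i : ℕ) + 1 ∧ (i : ℕ) + 1 + p ≤ n + ((k : ℕ) + 1) ∧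
            (k : ℕ) + 1 < (i : ℕ) + 1 then -1
        else 0
    let B : Matrix (Fin (n - 1)) (Fin (n - 1)) ℤ :=
      Matrix.of fun m k =>
        if ∃ l ∈ Finset.Icc 1 (n - q),
            ((((k : ℕ) : ℤ) - ((m : ℕ) : ℤ)) % (n : ℤ) = ((l : ℤ) * (p : ℤ)) % (n : ℤ))
          then 0 else 1
    let C : Matrix (Fin (n - 1)) (Fin (n - 1)) ℤ :=
      Matrix.of fun m k =>
        if ∃ l ∈ Finset.Icc 1 (n - q),
            ((((k : ℕ) : ℤ) + 1) % (n : ℤ) = ((l : ℤ) * (p : ℤ)) % (n : ℤ))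
          then 0 else 1
    A * (B - C)ᵀ = 1 ∧ A.det = 1 := by
  intro A B C
  have : NeZero n := ⟨by omega⟩
  have hmod : p * q % n = 1 := Nat.mod_eq_of_modEq hpq hn
  have hunit : (p : ZMod n) * q = 1 := by
    exact_mod_cast (ZMod.natCast_eq_natCast_iff _ _ _).2 hpq
  let e := finEquivNonzero n
  let X := translationMatrix ℤ (1 : ZMod n)
  have hX : ∑ k ∈ range n, X ^ k = 0 := geom_sum_translationMatrix_one_eq_zero ℤ
  have hXp : X ^ p = translationMatrix ℤ (p : ZMod n) := by
    rw [translationMatrix_pow, mul_one]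
  have hA : A = (∑ a ∈ range p, X ^ a)ᵀ.submatrix e e := by
    ext i k
    exact (transpose_geom_sum_translationMatrix_apply (by omega) i k).symm
  have hΩ : B - C = (∑ j ∈ range q, (X ^ p) ^ j).submatrix e e := by
    rw [hXp]
    ext m k
    exact (geom_sum_translationMatrix_natCast_apply hunit (by omega) m k).symm
  constructor
  · rw [hA, hΩ, transpose_submatrix, submatrix_mul_equiv, ← transpose_mul,
      geom_sum_pow_mul_geom_sum, geom_sum_eq_one_of_mod_eq_one hX hmod, transpose_one,
      submatrix_one_equiv]
  · have hconj : IsConj X (X ^ p) :=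
      hXp ▸ isConj_translationMatrix_one ℤ (Units.mkOfMulEqOne _ _ hunit)
    rw [hA, det_submatrix_equiv_self, det_transpose]
    exact det_geom_sum_eq_one_of_isConj_pow (by exact_mod_cast NeZero.ne n) hX hconj
end
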